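/- arXiv:0710.4358 — 2 statements merged into one kernel-verified Lean document; each statement's English description precedes it below -/
import Mathlib

section
/- Suppose L is a metric flag labeled triangulation of the 2-sphere that is not the suspension of a 3-gon. If s is a 3-Euclidean vertex of L and T is an infinite, maximal RA-suspension in L, then no 2-simplex of L is contained in both the closed star St_L(s) and T. -/
open Geometry

/-- The ambient space for our simplicial complexes. -/
abbrev E3 : Type := EuclideanSpace ℝ (Fin 3)

noncomputable instance : DecidableEq E3 := Classical.decEq _

namespace CoxOrb

variable (L : SimplicialComplex ℝ E3) (m : E3 → E3 → ℕ)

/-- `L` is a labeled triangulation of the 2-sphere with edge labeling `m`: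
`L` is finite, its underlying space is homeomorphic to the 2-sphere, and `m`
is symmetric with `m s t ≥ 2` on every edge `{s, t}` of `L`. -/
structure IsLabeledS2 : Prop where
  finite : L.faces.Finite
  sphere : Nonempty (L.space ≃ₜ (Metric.sphere (0 : E3) 1 : Set E3))
  symm : ∀ s t : E3, m s t = m t s
  two_le : ∀ s t : E3, s ≠ t → ({s, t} : Finset E3) ∈ L.faces → 2 ≤ m s t

/-- `L` with labeling `m` is metric flag: three pairwise-joined vertices span a
2-simplex iff the corresponding angle sum `π/m_st + π/m_tu + π/m_us` exceeds `π`. -/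
def MetricFlag : Prop :=
  ∀ s t u : E3, s ≠ t → t ≠ u → s ≠ u →
    ({s, t} : Finset E3) ∈ L.faces → ({t, u} : Finset E3) ∈ L.faces →
    ({s, u} : Finset E3) ∈ L.faces →
    (({s, t, u} : Finset E3) ∈ L.faces ↔
      1 / (m s t : ℝ) + 1 / (m t u : ℝ) + 1 / (m u s : ℝ) > 1)

/-- The link of a vertex `s`, as a set of faces of `L`. -/
def link (s : E3) : Set (Finset E3) :=
  {F | F ∈ L.faces ∧ s ∉ F ∧ insert s F ∈ L.faces}

/-- The closed star of a vertex `s`: all faces of `L` contained in some face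
containing `s`. -/
def star (s : E3) : Set (Finset E3) :=
  {F | F ∈ L.faces ∧ ∃ G ∈ L.faces, s ∈ G ∧ F ⊆ G}

/-- The vertices of the link of `s`. -/
def linkVerts (s : E3) : Set E3 :=
  {v | v ≠ s ∧ ({s, v} : Finset E3) ∈ L.faces}

/-- A set of faces `A` is a full subcomplex of `L`: every face of `L` all of
whose vertices are vertices of `A` belongs to `A`. -/
def IsFullSubcomplex (A : Set (Finset E3)) : Prop :=
  A ⊆ L.faces ∧ ∀ F ∈ L.faces, (∀ v ∈ F, ({v} : Finset E3) ∈ A) → F ∈ A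

/-- `s` is a 3-Euclidean vertex of `L`: it has valence three and the labels on
the three edges of its link have reciprocals summing to one. -/
def IsThreeEuclidean (s : E3) : Prop :=
  ({s} : Finset E3) ∈ L.faces ∧
  ∃ s₀ s₁ s₂ : E3, s₀ ≠ s₁ ∧ s₁ ≠ s₂ ∧ s₀ ≠ s₂ ∧
    linkVerts L s = {s₀, s₁, s₂} ∧
    1 / (m s₀ s₁ : ℝ) + 1 / (m s₁ s₂ : ℝ) + 1 / (m s₂ s₀ : ℝ) = 1

/-- `s` is a 4-Euclidean vertex of `L`: it has valence four, its link is the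
4-circuit on `v 0, v 1, v 2, v 3` (in cyclic order), and the labels on the
edges of the link are all `2`. -/
def IsFourEuclidean (s : E3) : Prop :=
  ({s} : Finset E3) ∈ L.faces ∧
  ∃ v : Fin 4 → E3, Function.Injective v ∧
    linkVerts L s = {v 0, v 1, v 2, v 3} ∧
    (∀ i : Fin 4, ({s, v i, v (i + 1)} : Finset E3) ∈ L.faces) ∧
    (∀ i : Fin 4, m (v i) (v (i + 1)) = 2)

/-- `L` is the boundary complex of a 3-simplex: four pairwise-joined vertices
spanning four 2-simplices. -/
def IsBoundaryOfThreeSimplex : Prop :=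
  ∃ a b c d : E3, a ≠ b ∧ a ≠ c ∧ a ≠ d ∧ b ≠ c ∧ b ≠ d ∧ c ≠ d ∧
    (∀ v : E3, ({v} : Finset E3) ∈ L.faces ↔ v = a ∨ v = b ∨ v = c ∨ v = d) ∧
    ({a, b, c} : Finset E3) ∈ L.faces ∧ ({a, b, d} : Finset E3) ∈ L.faces ∧
    ({a, c, d} : Finset E3) ∈ L.faces ∧ ({b, c, d} : Finset E3) ∈ L.faces

/-- `L` is the suspension of a 3-gon. -/
def IsSuspensionOfThreeGon : Prop :=
  ∃ t t' s₀ s₁ s₂ : E3, [t, t', s₀, s₁, s₂].Pairwise (· ≠ ·) ∧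
    (∀ v : E3, ({v} : Finset E3) ∈ L.faces ↔ v = t ∨ v = t' ∨ v = s₀ ∨ v = s₁ ∨ v = s₂) ∧
    ({s₀, s₁} : Finset E3) ∈ L.faces ∧ ({s₁, s₂} : Finset E3) ∈ L.faces ∧
    ({s₀, s₂} : Finset E3) ∈ L.faces ∧
    ({t, s₀} : Finset E3) ∈ L.faces ∧ ({t, s₁} : Finset E3) ∈ L.faces ∧
    ({t, s₂} : Finset E3) ∈ L.faces ∧
    ({t', s₀} : Finset E3) ∈ L.faces ∧ ({t', s₁} : Finset E3) ∈ L.faces ∧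
    ({t', s₂} : Finset E3) ∈ L.faces ∧
    ({t, t'} : Finset E3) ∉ L.faces

/-- The simplicial join of the subcomplex `Z` with the two points `t, t'`. -/
def joinSusp (Z : Set (Finset E3)) (t t' : E3) : Set (Finset E3) :=
  Z ∪ {{t}, {t'}} ∪ ((fun F => insert t F) '' Z) ∪ ((fun F => insert t' F) '' Z)

/-- `T` is the right-angled suspension in `L` of the subcomplex `Z` with
suspension points `t, t'` (not joined by an edge of `T`): every edge from a
suspension point to a vertex of `Z` is labeled `2`. -/
structure IsRASuspData (T Z : Set (Finset E3)) (t t' : E3) : Prop where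
  subset : T ⊆ L.faces
  zsubset : Z ⊆ L.faces
  zdown : ∀ F ∈ Z, ∀ G : Finset E3, G ⊆ F → G.Nonempty → G ∈ Z
  znonempty : Z.Nonempty
  tne : t ≠ t'
  t_notin : ∀ F ∈ Z, t ∉ F
  t'_notin : ∀ F ∈ Z, t' ∉ F
  labels : ∀ v : E3, ({v} : Finset E3) ∈ Z → m t v = 2 ∧ m t' v = 2
  eq : T = joinSusp Z t t'

/-- `T` is a right-angled suspension in `L`. -/
def IsRASusp (T : Set (Finset E3)) : Prop :=
  ∃ Z t t', IsRASuspData L m T Z t t'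

/-- The base `Z` of the suspension is neither a single vertex nor a single
edge, so that the suspension is infinite. -/
def InfiniteBase (Z : Set (Finset E3)) : Prop :=
  (¬ ∃ v : E3, Z = {({v} : Finset E3)}) ∧
  (¬ ∃ u v : E3, u ≠ v ∧ Z = {({u} : Finset E3), ({v} : Finset E3), ({u, v} : Finset E3)})

/-- `T` is an infinite, maximal right-angled suspension in `L`: it is an
RA-suspension of a full subcomplex which is neither a vertex nor an edge, and
`T` is not properly contained in another RA-suspension. -/
def IsInfMaxRASusp (T : Set (Finset E3)) : Prop :=
  (∃ Z t t', IsRASuspData L m T Z t t' ∧ InfiniteBase Z ∧ IsFullSubcomplex L Z) ∧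
  ∀ T', IsRASusp L m T' → T ⊆ T' → T = T'

/-- `v 0, v 1, v 2, v 3` (in cyclic order) form a Euclidean 4-circuit of `L`:
all four edge labels are `2` and the circuit is not the boundary of the union
of two 2-simplices of `L` sharing an edge. -/
def IsEuclidean4Circuit (v : Fin 4 → E3) : Prop :=
  Function.Injective v ∧
  (∀ i : Fin 4, ({v i, v (i + 1)} : Finset E3) ∈ L.faces) ∧
  (∀ i : Fin 4, m (v i) (v (i + 1)) = 2) ∧
  ¬ ((({v 0, v 1, v 2} : Finset E3) ∈ L.faces ∧ ({v 0, v 2, v 3} : Finset E3) ∈ L.faces) ∨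
     (({v 1, v 2, v 3} : Finset E3) ∈ L.faces ∧ ({v 0, v 1, v 3} : Finset E3) ∈ L.faces))

/-- The subcomplex consisting of the vertices and edges of the 4-circuit `v`. -/
def circuitComplex (v : Fin 4 → E3) : Set (Finset E3) :=
  {F | (∃ i : Fin 4, F = {v i}) ∨ (∃ i : Fin 4, F = {v i, v (i + 1)})}

/-- `T` is the right-angled cone on a Euclidean 4-circuit: the closed star of a
vertex `c` of valence four whose link is a Euclidean 4-circuit, all four edges
containing `c` being labeled `2`. -/
def IsRAConeOn4Circuit (T : Set (Finset E3)) : Prop :=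
  ∃ (c : E3) (v : Fin 4 → E3), IsEuclidean4Circuit L m v ∧
    linkVerts L c = {v 0, v 1, v 2, v 3} ∧
    (∀ i : Fin 4, ({c, v i, v (i + 1)} : Finset E3) ∈ L.faces) ∧
    (∀ i : Fin 4, m c (v i) = 2) ∧
    T = star L c

/-- The generating relation for Seifert subcomplexes: two infinite, maximal
RA-suspensions whose intersection is a Euclidean 4-circuit. -/
def SeifertRel (S S' : Set (Finset E3)) : Prop :=
  IsInfMaxRASusp L m S ∧ IsInfMaxRASusp L m S' ∧
  ∃ v : Fin 4 → E3, IsEuclidean4Circuit L m v ∧ S ∩ S' = circuitComplex v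

/-- `D` is a Seifert subcomplex of `L`: the union of the members of an
equivalence class of infinite, maximal RA-suspensions under the equivalence
relation generated by `SeifertRel`. -/
def IsSeifertSubcomplex (D : Set (Finset E3)) : Prop :=
  ∃ S₀, IsInfMaxRASusp L m S₀ ∧
    D = ⋃₀ {S | IsInfMaxRASusp L m S ∧ Relation.EqvGen (SeifertRel L m) S₀ S}

end CoxOrb

open CoxOrb

/-!
Injective continuous self-maps of the two-sphere are surjective, by Borsuk–Ulam, so a triangulated
sphere has no free edge: compressing a triangle away from such an edge would be injective but not
surjective. Let `s` be a 3-Euclidean vertex and `F` a triangle in its star and in an RA-suspension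
with base `Z` and suspension points `t`, `t'`. The link vertices of `s` have angle sum `1`, so they
span no triangle; hence `s ∈ F`, and rotating around `s` across its edges shows that any two link
vertices of `s` form a triangle with `s`. If `s` is a vertex of `Z`, then `t`, `t'` and some vertex
of `Z` make up the link of `s`, with angle sum `1/2 + 1/2 + 1/m > 1`. If `s` is a suspension point,
then by fullness `Z` contains the 3-gon on the link of `s`; the suspension of this 3-gon is a sphere
inside `L`, hence all of `L`.
-/

namespace CoxOrb

open Metric Module

section Sphere

open Complex

variable {E : Type*} [NormedAddCommGroup E] [InnerProductSpace ℝ E]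

theorem exists_continuousMap_exp_eq {X : Type*} [TopologicalSpace X] [SimplyConnectedSpace X]
    [LocallyPathConnectedSpace X] (g : C(X, ℂ)) (hg : ∀ x, g x ≠ 0) :
    ∃ h : C(X, ℂ), ∀ x, exp (h x) = g x := by
  obtain ⟨x₀⟩ : Nonempty X := inferInstance
  obtain ⟨h, ⟨-, hh⟩, -⟩ := isCoveringMapOn_exp.existsUnique_continuousMap_lifts g
    (a₀ := x₀) (e₀ := log (g x₀)) (exp_log (hg x₀)) hg
  exact ⟨h, congrFun hh⟩

theorem exp_ne_neg_one_of_im_eq_zero {z : ℂ} (hz : z.im = 0) : exp z ≠ -1 := by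
  intro h
  have h' := congrArg re h
  rw [exp_re, hz, Real.cos_zero, mul_one, neg_re, one_re] at h'
  linarith [Real.exp_pos z.re]

-- Inverse stereographic projection is odd only on the sphere of radius `2`, which it maps to the
-- equator.
theorem stereoInvFun_neg {v : E} (hv : ‖v‖ = 1) {w : (ℝ ∙ v)ᗮ} (hw : ‖w‖ = 2) :
    stereoInvFun hv (-w) = -stereoInvFun hv w := by
  have hcoeff : ‖w‖ ^ 2 - 4 = 0 := by rw [hw]; norm_num
  ext
  simp only [stereoInvFun_apply, coe_neg_sphere, Submodule.coe_neg, norm_neg, hcoeff, zero_smul,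
    add_zero, smul_neg]

theorem one_lt_rank_orthogonal_span_singleton (hE : 2 < finrank ℝ E) {v : E} (hv : v ≠ 0) :
    1 < Module.rank ℝ (ℝ ∙ v)ᗮ := by
  have : FiniteDimensional ℝ E := .of_finrank_pos (by omega)
  have := (ℝ ∙ v).finrank_add_finrank_orthogonal
  rw [finrank_span_singleton hv] at this
  rw [← finrank_eq_rank, Nat.one_lt_cast]
  omega

theorem exists_eq_zero_of_odd_on_sphere (hE : 1 < Module.rank ℝ E) {r : ℝ} (hr : 0 ≤ r) {k : E → ℝ}
    (hk : Continuous k) (hodd : ∀ w, k (-w) = -k w) : ∃ w, ‖w‖ = r ∧ k w = 0 := by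
  obtain ⟨w, hw⟩ := (isConnected_sphere hE (0 : E) hr).nonempty
  have hw' : -w ∈ sphere (0 : E) r := by simpa using hw
  have huIcc : (0 : ℝ) ∈ Set.uIcc (k w) (k (-w)) := by
    rw [hodd, Set.mem_uIcc]
    rcases le_total (k w) 0 with h | h
    · exact .inl ⟨h, by linarith⟩
    · exact .inr ⟨by linarith, h⟩
  have hconn := ((isPreconnected_sphere hE (0 : E) r).image k hk.continuousOn).ordConnected
  obtain ⟨u, hu, hu0⟩ := hconn.uIcc_subset (Set.mem_image_of_mem k hw)
    (Set.mem_image_of_mem k hw') huIcc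
  exact ⟨u, mem_sphere_zero_iff_norm.1 hu, hu0⟩

theorem borsukUlam_complex (hE : 2 < finrank ℝ E) {f : sphere (0 : E) 1 → ℂ}
    (hf : Continuous f) : ∃ x, f (-x) = f x := by
  by_contra! hne
  have : Nontrivial E := nontrivial_of_finrank_pos (R := ℝ) (by omega)
  obtain ⟨v, hv⟩ := exists_norm_eq E zero_le_one
  let φ := stereoInvFun hv
  have hφ : Continuous φ := continuous_stereoInvFun hv
  -- In the stereographic chart, `g = exp h`. Along the equator `g` is odd, whereas the imaginary
  -- part of `h (-w) - h w`, being odd, vanishes somewhere, so that `g (-w) / g w > 0` there.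
  let g : C((ℝ ∙ v)ᗮ, ℂ) := ⟨fun w => f (φ w) - f (-φ w), by fun_prop⟩
  obtain ⟨h, hh⟩ := exists_continuousMap_exp_eq g fun w => sub_ne_zero.2 (hne (φ w)).symm
  obtain ⟨w, hw, hw0⟩ := exists_eq_zero_of_odd_on_sphere
    (one_lt_rank_orthogonal_span_singleton hE (norm_ne_zero_iff.1 (hv ▸ one_ne_zero)))
    zero_le_two (k := fun w => (h (-w) - h w).im) (by fun_prop) fun w => by simp
  have hgw : g (-w) = -g w := by simp [g, φ, stereoInvFun_neg hv hw]
  refine exp_ne_neg_one_of_im_eq_zero hw0 ?_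
  rw [exp_sub, hh, hh, hgw, neg_div, div_self (hh w ▸ exp_ne_zero _)]

theorem not_injective_of_continuous_sphere_complex (hE : 2 < finrank ℝ E)
    {f : sphere (0 : E) 1 → ℂ} (hf : Continuous f) : ¬ Function.Injective f := by
  obtain ⟨x, hx⟩ := borsukUlam_complex hE hf
  exact fun hinj => ne_neg_of_mem_unit_sphere ℝ x (hinj hx).symm

theorem surjective_of_continuous_injective_sphere (hE : finrank ℝ E = 3)
    {f : sphere (0 : E) 1 → sphere (0 : E) 1} (hf : Continuous f) (hinj : Function.Injective f) :
    Function.Surjective f := by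
  have : Fact (finrank ℝ E = 2 + 1) := ⟨hE⟩
  by_contra hsurj
  obtain ⟨p, hp⟩ : ∃ p, ∀ x, f x ≠ p := by simpa [Function.Surjective] using hsurj
  let e := stereographic' 2 p
  have hsource : ∀ x, f x ∈ e.source := by simpa [e] using hp
  let ι := Complex.orthonormalBasisOneI.repr.symm
  refine not_injective_of_continuous_sphere_complex (by omega : 2 < finrank ℝ E)
    (f := fun x => ι (e (f x)))
    (ι.continuous.comp (e.continuousOn.comp_continuous hf hsource)) fun x y hxy => ?_
  exact hinj (e.injOn (hsource x) (hsource y) (ι.injective hxy))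

theorem surjective_of_continuous_injective_of_homeomorph_sphere {X Y : Type*} [TopologicalSpace X]
    [TopologicalSpace Y] (hE : finrank ℝ E = 3) (eX : X ≃ₜ sphere (0 : E) 1)
    (eY : Y ≃ₜ sphere (0 : E) 1) {f : X → Y} (hf : Continuous f) (hinj : Function.Injective f) :
    Function.Surjective f := by
  have h := surjective_of_continuous_injective_sphere hE (f := eY ∘ f ∘ eX.symm) (by fun_prop)
    (eY.injective.comp (hinj.comp eX.symm.injective))
  rwa [EquivLike.comp_surjective, EquivLike.surjective_comp] at h

end Sphere

section Realization

variable {V : Type*}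

/-- The simplex spanned by `F` in barycentric coordinates: a point is the family of its weights on
all of `V`, which vanish outside `F`. -/
def barySimplex (F : Finset V) : Set (V → ℝ) :=
  {w | (∀ v, 0 ≤ w v) ∧ (∀ v ∉ F, w v = 0) ∧ ∑ v ∈ F, w v = 1}

/-- The geometric realization of an abstract complex `K` in barycentric coordinates. It is taken as
a subspace of the product `V → ℝ`, which gives the usual topology for finite `K`. -/
def realization (K : Set (Finset V)) : Set (V → ℝ) :=
  ⋃ F ∈ K, barySimplex F

theorem mem_realization {K : Set (Finset V)} {w : V → ℝ} :
    w ∈ realization K ↔ ∃ F ∈ K, w ∈ barySimplex F := by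
  simp only [realization, Set.mem_iUnion₂, exists_prop]

theorem isCompact_barySimplex (F : Finset V) : IsCompact (barySimplex F) := by
  refine (isCompact_univ_pi fun _ => isCompact_Icc (a := (0 : ℝ)) (b := 1)).of_isClosed_subset ?_
    fun w hw v _ => ⟨hw.1 v, ?_⟩
  · have hoff : IsClosed {w : V → ℝ | ∀ v ∉ F, w v = 0} := by
      simp only [Set.ofPred_forall]
      exact isClosed_iInter fun v => isClosed_iInter fun _ =>
        isClosed_eq (continuous_apply v) continuous_const
    have hnonneg : IsClosed {w : V → ℝ | ∀ v, 0 ≤ w v} := isClosed_Ici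
    exact hnonneg.inter (hoff.inter (isClosed_eq (by fun_prop) continuous_const))
  · by_cases hv : v ∈ F
    · exact hw.2.2 ▸ Finset.single_le_sum (fun u _ => hw.1 u) hv
    · exact (hw.2.1 v hv).trans_le zero_le_one

theorem isCompact_realization {K : Set (Finset V)} (hK : K.Finite) : IsCompact (realization K) :=
  hK.isCompact_biUnion fun F _ => isCompact_barySimplex F

theorem barySimplex_mono {F G : Finset V} (hFG : F ⊆ G) : barySimplex F ⊆ barySimplex G :=
  fun _ hw => ⟨hw.1, fun v hv => hw.2.1 v fun h => hv (hFG h),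
    (Finset.sum_subset hFG fun v _ hv => hw.2.1 v hv).symm.trans hw.2.2⟩

theorem single_mem_realization [DecidableEq V] {K : Set (Finset V)} {v : V} (hv : {v} ∈ K) :
    Pi.single v (1 : ℝ) ∈ realization K :=
  mem_realization.2 ⟨{v}, hv, fun u => by by_cases h : u = v <;> simp [h],
    fun u hu => Pi.single_eq_of_ne (by simpa using hu) _, by simp⟩

section Geometric

variable {E : Type*} [AddCommGroup E] [Module ℝ E]

theorem finsum_smul_eq_sum {F : Finset E} {w : E → ℝ} (hw : ∀ v ∉ F, w v = 0) :
    ∑ᶠ v, w v • v = ∑ v ∈ F, w v • v :=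
  finsum_eq_sum_of_support_subset _ fun v hv => by
    by_contra h
    exact hv (by simp [hw v h])

theorem exists_barySimplex_finsum_eq_of_mem_convexHull {F : Finset E} {x : E}
    (hx : x ∈ convexHull ℝ (F : Set E)) : ∃ w ∈ barySimplex F, ∑ᶠ v, w v • v = x := by
  obtain ⟨u, hu0, hu1, rfl⟩ := Finset.mem_convexHull'.1 hx
  have hF : ∀ v ∈ F, (F : Set E).indicator u v = u v := fun v hv => Set.indicator_of_mem hv u
  have hoff : ∀ v ∉ F, (F : Set E).indicator u v = 0 := fun v hv => Set.indicator_of_notMem hv u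
  refine ⟨(F : Set E).indicator u, ⟨Set.indicator_nonneg hu0, hoff, ?_⟩, ?_⟩
  · rw [Finset.sum_congr rfl hF, hu1]
  · rw [finsum_smul_eq_sum hoff]
    exact Finset.sum_congr rfl fun v hv => by rw [hF v hv]

theorem finsum_smul_mem_convexHull {F : Finset E} {w : E → ℝ} (hw : w ∈ barySimplex F) :
    ∑ᶠ v, w v • v ∈ convexHull ℝ (F : Set E) := by
  rw [finsum_smul_eq_sum hw.2.1]
  exact Finset.mem_convexHull'.2 ⟨w, fun v _ => hw.1 v, hw.2.2, rfl⟩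

theorem eq_of_finsum_smul_eq {F : Finset E} (hF : AffineIndependent ℝ ((↑) : F → E))
    {w w' : E → ℝ} (hw : w ∈ barySimplex F) (hw' : w' ∈ barySimplex F)
    (h : ∑ᶠ v, w v • v = ∑ᶠ v, w' v • v) : w = w' := by
  rw [finsum_smul_eq_sum hw.2.1, finsum_smul_eq_sum hw'.2.1] at h
  funext v
  by_cases hv : v ∈ F
  · exact hF.eq_of_sum_eq_sum_subtype (hw.2.2.trans hw'.2.2.symm) h v hv
  · rw [hw.2.1 v hv, hw'.2.1 v hv]

variable (L : SimplicialComplex ℝ E)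

theorem bijOn_finsum_smul_realization :
    Set.BijOn (fun w : E → ℝ => ∑ᶠ v, w v • v) (realization L.faces) L.space := by
  classical
  refine ⟨fun w hw => ?_, fun w hw w' hw' h => ?_, fun x hx => ?_⟩
  · obtain ⟨F, hF, hwF⟩ := mem_realization.1 hw
    exact L.convexHull_subset_space hF (finsum_smul_mem_convexHull hwF)
  · obtain ⟨F, hF, hwF⟩ := mem_realization.1 hw
    obtain ⟨G, hG, hwG⟩ := mem_realization.1 hw'
    replace h : ∑ᶠ v, w v • v = ∑ᶠ v, w' v • v := h
    have hx := L.inter_subset_convexHull hF hG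
      ⟨finsum_smul_mem_convexHull hwF, h ▸ finsum_smul_mem_convexHull hwG⟩
    rw [← Finset.coe_inter] at hx
    obtain ⟨u, hu, hux⟩ := exists_barySimplex_finsum_eq_of_mem_convexHull hx
    rw [← eq_of_finsum_smul_eq (L.indep hF) (barySimplex_mono Finset.inter_subset_left hu) hwF hux]
    exact eq_of_finsum_smul_eq (L.indep hG) (barySimplex_mono Finset.inter_subset_right hu) hwG
      (hux.trans h)
  · obtain ⟨F, hF, hxF⟩ := SimplicialComplex.mem_space_iff.1 hx
    obtain ⟨w, hw, rfl⟩ := exists_barySimplex_finsum_eq_of_mem_convexHull hxF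
    exact ⟨w, mem_realization.2 ⟨F, hF, hw⟩, rfl⟩

theorem continuousOn_finsum_smul_realization [TopologicalSpace E] [ContinuousAdd E]
    [ContinuousSMul ℝ E] {K : Set (Finset E)} (hK : K.Finite) :
    ContinuousOn (fun w : E → ℝ => ∑ᶠ v, w v • v) (realization K) := by
  classical
  let S : Finset E := hK.toFinset.biUnion id
  have hS : Set.EqOn (fun w : E → ℝ => ∑ᶠ v, w v • v) (fun w => ∑ v ∈ S, w v • v)
      (realization K) := fun w hw => by
    obtain ⟨F, hF, hwF⟩ := mem_realization.1 hw
    exact finsum_smul_eq_sum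
      (barySimplex_mono (Finset.subset_biUnion_of_mem id (hK.mem_toFinset.2 hF)) hwF).2.1
  exact ContinuousOn.congr (by fun_prop) hS

theorem nonempty_realization_homeomorph_space [TopologicalSpace E] [ContinuousAdd E]
    [ContinuousSMul ℝ E] [T2Space E] (hL : L.faces.Finite) :
    Nonempty (realization L.faces ≃ₜ L.space) := by
  have : CompactSpace (realization L.faces) :=
    isCompact_iff_compactSpace.1 (isCompact_realization hL)
  have hbij := bijOn_finsum_smul_realization L
  exact ⟨Continuous.homeoOfEquivCompactToT2 (f := Set.BijOn.equiv _ hbij)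
    ((continuousOn_finsum_smul_realization hL).mapsToRestrict hbij.mapsTo)⟩

end Geometric

section FreeFace

variable [DecidableEq V] {σ : Finset V} {c : V}

/-- The compression of the simplex `insert c σ` away from its face `σ`: each vertex of `σ` gives up
half of the least weight on `σ` in favour of `c`. It fixes every point whose carrier does not
contain `σ`. -/
noncomputable def pushAway (hσ : σ.Nonempty) (c : V) (w : V → ℝ) (v : V) : ℝ :=
  w v + σ.inf' hσ w / 2 * if v ∈ σ then -1 else if v = c then (σ.card : ℝ) else 0

theorem continuous_pushAway (hσ : σ.Nonempty) (c : V) : Continuous (pushAway hσ c) := by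
  have : Continuous fun w : V → ℝ => σ.inf' hσ w :=
    Continuous.finset_inf'_apply hσ fun v _ => continuous_apply v
  unfold pushAway
  fun_prop

theorem inf'_pushAway (hσ : σ.Nonempty) (w : V → ℝ) :
    σ.inf' hσ (pushAway hσ c w) = σ.inf' hσ w / 2 := by
  have hmap := map_finset_inf' (OrderIso.addRight (-(σ.inf' hσ w / 2))) hσ w
  rw [Finset.inf'_congr hσ rfl (g := OrderIso.addRight (-(σ.inf' hσ w / 2)) ∘ w)
    fun v hv => by simp [pushAway, hv], ← hmap, OrderIso.addRight_apply]
  ring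

theorem pushAway_injective (hσ : σ.Nonempty) : Function.Injective (pushAway hσ c) := by
  intro w w' h
  have hinf : σ.inf' hσ w = σ.inf' hσ w' := by
    have := congrArg (σ.inf' hσ) h
    rw [inf'_pushAway, inf'_pushAway] at this
    linarith
  funext v
  have hv := congrFun h v
  simp only [pushAway, hinf] at hv
  exact add_right_cancel hv

theorem pushAway_apply_pos (hσ : σ.Nonempty) (hc : c ∉ σ) {w : V → ℝ} (hw : 0 ≤ w c)
    (hpos : 0 < σ.inf' hσ w) : 0 < pushAway hσ c w c := by
  have : (0 : ℝ) < σ.card := by exact_mod_cast hσ.card_pos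
  simp only [pushAway, if_neg hc, if_true]
  positivity

theorem pushAway_mem_barySimplex (hσ : σ.Nonempty) (hc : c ∉ σ) {w : V → ℝ}
    (hw : w ∈ barySimplex (insert c σ)) : pushAway hσ c w ∈ barySimplex (insert c σ) := by
  have hinf : 0 ≤ σ.inf' hσ w := (Finset.le_inf'_iff hσ w).2 fun v _ => hw.1 v
  refine ⟨fun v => ?_, fun v hv => ?_, ?_⟩
  · by_cases hv : v ∈ σ
    · have := Finset.inf'_le w hv
      simp only [pushAway, if_pos hv]
      linarith
    · have := hw.1 v
      simp only [pushAway, if_neg hv]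
      positivity
  · obtain ⟨hvc, hvσ⟩ := not_or.1 (Finset.mem_insert.not.1 hv)
    simp only [pushAway, hw.2.1 v hv, if_neg hvσ, if_neg hvc, mul_zero, add_zero]
  · have hdir :
        ∑ v ∈ insert c σ, (if v ∈ σ then -1 else if v = c then (σ.card : ℝ) else 0) = 0 := by
      rw [Finset.sum_insert hc, if_neg hc, if_pos rfl,
        Finset.sum_congr rfl fun v (hv : v ∈ σ) => if_pos hv]
      simp
    simp only [pushAway, Finset.sum_add_distrib, ← Finset.mul_sum, hdir, mul_zero, add_zero]
    exact hw.2.2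

theorem pushAway_mem_realization {K : Set (Finset V)} (hσ : σ.Nonempty) (hc : c ∉ σ)
    (hcK : insert c σ ∈ K) (hfree : ∀ G ∈ K, σ ⊆ G → G ⊆ insert c σ) {w : V → ℝ}
    (hw : w ∈ realization K) : pushAway hσ c w ∈ realization K := by
  obtain ⟨F, hF, hwF⟩ := mem_realization.1 hw
  by_cases hσF : σ ⊆ F
  · exact mem_realization.2 ⟨_, hcK,
      pushAway_mem_barySimplex hσ hc (barySimplex_mono (hfree F hF hσF) hwF)⟩
  · obtain ⟨v, hvσ, hvF⟩ := Finset.not_subset.1 hσF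
    have hinf : σ.inf' hσ w = 0 := le_antisymm
      ((Finset.inf'_le w hvσ).trans_eq (hwF.2.1 v hvF))
      ((Finset.le_inf'_iff hσ w).2 fun v _ => hwF.1 v)
    have hfix : pushAway hσ c w = w := by funext v; simp [pushAway, hinf]
    rwa [hfix]

theorem exists_mem_realization_inf'_pos {K : Set (Finset V)} (hσ : σ.Nonempty) (hc : c ∉ σ)
    (hcK : insert c σ ∈ K) : ∃ w ∈ realization K, 0 < σ.inf' hσ w ∧ w c = 0 := by
  have hcard : (0 : ℝ) < σ.card := by exact_mod_cast hσ.card_pos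
  let b : V → ℝ := fun v => if v ∈ σ then (σ.card : ℝ)⁻¹ else 0
  have hb : b ∈ barySimplex σ := by
    refine ⟨fun v => ?_, fun v hv => if_neg hv, ?_⟩
    · positivity
    · rw [Finset.sum_congr rfl fun v hv => if_pos hv, Finset.sum_const, nsmul_eq_mul,
        mul_inv_cancel₀ hcard.ne']
  refine ⟨b, mem_realization.2 ⟨_, hcK, barySimplex_mono (Finset.subset_insert c σ) hb⟩,
    (Finset.lt_inf'_iff hσ).2 fun v hv => ?_, if_neg hc⟩
  simp only [b, if_pos hv]
  positivity

theorem exists_mem_superset_not_subset_insert {K : Set (Finset V)}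
    (hK : ∀ f : realization K → realization K, Continuous f → Function.Injective f →
      Function.Surjective f)
    (hσ : σ.Nonempty) (hc : c ∉ σ) (hcK : insert c σ ∈ K) :
    ∃ G ∈ K, σ ⊆ G ∧ ¬ G ⊆ insert c σ := by
  by_contra! hfree
  have hmaps : Set.MapsTo (pushAway hσ c) (realization K) (realization K) :=
    fun w hw => pushAway_mem_realization hσ hc hcK hfree hw
  have hsurj := hK (hmaps.restrict _ _ _)
    ((continuous_pushAway hσ c).continuousOn.mapsToRestrict hmaps)
    (hmaps.restrict_inj.2 (pushAway_injective hσ).injOn)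
  obtain ⟨b, hbK, hb, hbc⟩ := exists_mem_realization_inf'_pos hσ hc hcK
  obtain ⟨⟨w, hw⟩, hwb⟩ := hsurj ⟨b, hbK⟩
  replace hwb : pushAway hσ c w = b := congrArg Subtype.val hwb
  obtain ⟨F, -, hwF⟩ := mem_realization.1 hw
  have hwpos : 0 < σ.inf' hσ w := by rw [← hwb, inf'_pushAway] at hb; linarith
  exact (pushAway_apply_pos hσ hc (hwF.1 c) hwpos).ne' (hwb ▸ hbc)

end FreeFace

section Extend

variable {ι : Type*}

theorem extend_mem_realization {K' : Set (Finset ι)} {K : Set (Finset V)} (a : ι ↪ V)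
    (ha : ∀ F ∈ K', F.map a ∈ K) {w : ι → ℝ} (hw : w ∈ realization K') :
    Function.extend a w 0 ∈ realization K := by
  obtain ⟨F, hF, hnonneg, hoff, hsum⟩ := mem_realization.1 hw
  refine mem_realization.2 ⟨F.map a, ha F hF, fun v => ?_, fun v hv => ?_, ?_⟩
  · rcases em (∃ i, a i = v) with ⟨i, rfl⟩ | h
    · simpa only [a.injective.extend_apply] using hnonneg i
    · rw [Function.extend_apply' _ _ _ h, Pi.zero_apply]
  · rcases em (∃ i, a i = v) with ⟨i, rfl⟩ | h
    · simpa only [a.injective.extend_apply] using hoff i fun h => hv (Finset.mem_map_of_mem a h)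
    · rw [Function.extend_apply' _ _ _ h, Pi.zero_apply]
  · simpa only [Finset.sum_map, a.injective.extend_apply] using hsum

theorem continuous_extend_zero (a : ι ↪ V) :
    Continuous fun w : ι → ℝ => Function.extend a w 0 := by
  refine continuous_pi fun v => ?_
  rcases em (∃ i, a i = v) with ⟨i, rfl⟩ | h
  · simpa only [a.injective.extend_apply] using continuous_apply i
  · simpa only [Function.extend_apply' _ _ _ h] using continuous_const

end Extend

end Realization

section Suspension

open Sum

/-- The 2-simplices of the suspension of a 3-gon, with suspension points `Fin 2` and base the cyclic
3-gon on `Fin 3`. Only the 2-simplices are recorded, since their union is the realization. -/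
def suspensionThreeGon : Set (Finset (Fin 2 ⊕ Fin 3)) :=
  {F | ∃ i j, F = {inl i, inr j, inr (j + 1)}}

/-- The unnormalized barycentric coordinates of `x` in the fan over the suspension of a 3-gon. The
suspension points span the third axis, and the 3-gon has vertices `e₀`, `e₁`, `-e₀ - e₁` in the
plane; subtracting the minimum leaves at most two positive weights on the 3-gon. -/
def suspensionWeight (x : E3) : Fin 2 ⊕ Fin 3 → ℝ :=
  Sum.elim ![max (x 2) 0, max (-x 2) 0] fun j => ![x 0, x 1, 0] j - min (min (x 0) (x 1)) 0

theorem continuous_suspensionWeight : Continuous suspensionWeight := by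
  refine continuous_pi fun k => ?_
  rcases k with i | j
  · fin_cases i
    · change Continuous fun x : E3 => max (x 2) 0
      fun_prop
    · change Continuous fun x : E3 => max (-x 2) 0
      fun_prop
  · fin_cases j
    · change Continuous fun x : E3 => x 0 - min (min (x 0) (x 1)) 0
      fun_prop
    · change Continuous fun x : E3 => x 1 - min (min (x 0) (x 1)) 0
      fun_prop
    · change Continuous fun x : E3 => 0 - min (min (x 0) (x 1)) 0
      fun_prop

theorem suspensionWeight_nonneg (x : E3) (k : Fin 2 ⊕ Fin 3) : 0 ≤ suspensionWeight x k := by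
  rcases k with i | j
  · fin_cases i <;> simp [suspensionWeight]
  · fin_cases j <;> simp [suspensionWeight]

/-- The point of the fan over the suspension of a 3-gon with prescribed weights; it is a linear left
inverse of `suspensionWeight`. -/
noncomputable def pointOfWeight : (Fin 2 ⊕ Fin 3 → ℝ) →ₗ[ℝ] E3 :=
  Fintype.linearCombination ℝ (Sum.elim
    ![EuclideanSpace.single 2 1, -EuclideanSpace.single 2 1]
    ![EuclideanSpace.single 0 1, EuclideanSpace.single 1 1,
      -EuclideanSpace.single 0 1 - EuclideanSpace.single 1 1])

theorem pointOfWeight_suspensionWeight (x : E3) : pointOfWeight (suspensionWeight x) = x := by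
  ext k
  have htwo : max (x 2) 0 + -max (-x 2) 0 = x 2 :=
    (sub_eq_add_neg _ _).symm.trans (max_zero_sub_max_neg_zero_eq_self _)
  fin_cases k <;> simp [pointOfWeight, suspensionWeight, Fintype.linearCombination_apply,
    Fin.sum_univ_succ, htwo]

theorem exists_forall_notMem_suspensionWeight_eq_zero (x : E3) :
    ∃ F ∈ suspensionThreeGon, ∀ k ∉ F, suspensionWeight x k = 0 := by
  obtain ⟨i, hi⟩ : ∃ i : Fin 2, suspensionWeight x (inl (i + 1)) = 0 := by
    rcases le_total 0 (x 2) with h | h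
    · exact ⟨0, by simp [suspensionWeight, h]⟩
    · exact ⟨1, by simp [suspensionWeight, h]⟩
  obtain ⟨j, hj⟩ : ∃ j : Fin 3, suspensionWeight x (inr (j + 2)) = 0 := by
    rcases min_choice (min (x 0) (x 1)) 0 with h | h
    · rcases min_choice (x 0) (x 1) with h' | h' <;> rw [h'] at h
      · exact ⟨1, by simp [suspensionWeight, h, h', show (1 + 2 : Fin 3) = 0 from rfl]⟩
      · exact ⟨2, by simp [suspensionWeight, h, h', show (2 + 2 : Fin 3) = 1 from rfl]⟩
    · exact ⟨0, by simp [suspensionWeight, h]⟩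
  refine ⟨_, ⟨i, j, rfl⟩, fun k hk => ?_⟩
  rcases k with i' | j'
  · have : i' = i + 1 := by
      have : i' ≠ i := fun h => hk (by simp [h])
      omega
    rwa [this]
  · have : j' = j + 2 := by
      have : j' ≠ j := fun h => hk (by simp [h])
      have : j' ≠ j + 1 := fun h => hk (by simp [h])
      omega
    rwa [this]

theorem sum_suspensionWeight_pos {x : E3} (hx : x ≠ 0) : 0 < ∑ k, suspensionWeight x k := by
  refine (Finset.sum_nonneg fun k _ => suspensionWeight_nonneg x k).lt_of_ne' fun h => hx ?_
  have hzero : suspensionWeight x = 0 := funext fun k =>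
    (Finset.sum_eq_zero_iff_of_nonneg fun k _ => suspensionWeight_nonneg x k).1 h k
      (Finset.mem_univ k)
  rw [← pointOfWeight_suspensionWeight x, hzero, map_zero]

/-- The radial map from the sphere to the realization of `suspensionThreeGon`, with the junk value
`0` at the origin. -/
noncomputable def suspensionCoord (x : E3) : Fin 2 ⊕ Fin 3 → ℝ :=
  (∑ k, suspensionWeight x k)⁻¹ • suspensionWeight x

theorem suspensionCoord_mem_realization {x : E3} (hx : x ≠ 0) :
    suspensionCoord x ∈ realization suspensionThreeGon := by
  obtain ⟨F, hF, hoff⟩ := exists_forall_notMem_suspensionWeight_eq_zero x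
  have hpos := sum_suspensionWeight_pos hx
  refine mem_realization.2 ⟨F, hF, fun k => ?_, fun k hk => ?_, ?_⟩
  · exact mul_nonneg (inv_nonneg.2 hpos.le) (suspensionWeight_nonneg x k)
  · simp [suspensionCoord, hoff k hk]
  · simp only [suspensionCoord, Pi.smul_apply, ← Finset.smul_sum]
    rw [Finset.sum_subset (Finset.subset_univ F) fun k _ hk => hoff k hk, smul_eq_mul,
      inv_mul_cancel₀ hpos.ne']

theorem continuousOn_suspensionCoord : ContinuousOn suspensionCoord {0}ᶜ := by
  have hsum : Continuous fun x => ∑ k, suspensionWeight x k :=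
    continuous_finsetSum _ fun k _ => (continuous_apply k).comp continuous_suspensionWeight
  exact (hsum.continuousOn.inv₀ fun x hx => (sum_suspensionWeight_pos hx).ne').smul
    continuous_suspensionWeight.continuousOn

theorem injOn_suspensionCoord_sphere : Set.InjOn suspensionCoord (sphere (0 : E3) 1) := by
  intro x hx y hy h
  have hx' := sum_suspensionWeight_pos (ne_zero_of_mem_unit_sphere ⟨x, hx⟩)
  have hy' := sum_suspensionWeight_pos (ne_zero_of_mem_unit_sphere ⟨y, hy⟩)
  replace h := congrArg pointOfWeight h
  simp only [suspensionCoord, map_smul, pointOfWeight_suspensionWeight] at h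
  have hray : SameRay ℝ x y := .inr (.inr ⟨_, _, inv_pos.2 hx', inv_pos.2 hy', h⟩)
  rw [mem_sphere_zero_iff_norm] at hx hy
  exact (sameRay_iff_of_norm_eq (hx.trans hy.symm)).1 hray

variable {V : Type*} {K : Set (Finset V)}

theorem mem_range_of_suspension_embedding (eK : realization K ≃ₜ sphere (0 : E3) 1)
    (a : Fin 2 ⊕ Fin 3 ↪ V) (ha : ∀ F ∈ suspensionThreeGon, F.map a ∈ K) {v : V} (hv : {v} ∈ K) :
    v ∈ Set.range a := by
  classical
  let f (x : sphere (0 : E3) 1) : realization K := ⟨Function.extend a (suspensionCoord x) 0,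
    extend_mem_realization a ha (suspensionCoord_mem_realization (ne_zero_of_mem_unit_sphere x))⟩
  have hf : Continuous f := Continuous.subtype_mk ((continuous_extend_zero a).comp
    (continuousOn_suspensionCoord.comp_continuous continuous_subtype_val
      ne_zero_of_mem_unit_sphere)) _
  have hinj : Function.Injective f := fun x y h => Subtype.ext <| injOn_suspensionCoord_sphere
    x.2 y.2 (Function.extend_injective a.injective (0 : V → ℝ) (congrArg Subtype.val h))
  obtain ⟨x, hx⟩ := surjective_of_continuous_injective_of_homeomorph_sphere
    (finrank_euclideanSpace_fin (𝕜 := ℝ)) (.refl _) eK hf hinj ⟨_, single_mem_realization hv⟩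
  by_contra hrange
  have hxv := congrFun (congrArg Subtype.val hx) v
  simp only [f, Function.extend_apply' _ _ _ hrange, Pi.zero_apply, Pi.single_eq_same] at hxv
  exact zero_ne_one hxv

end Suspension

section Triangles

variable {V : Type*}

/-- The angle sum, in units of `π`, of a triangle with vertices `a`, `b`, `c`: an edge labelled `k`
contributes the angle `π / k`. -/
noncomputable def angleSum (m : V → V → ℕ) (a b c : V) : ℝ :=
  1 / (m a b : ℝ) + 1 / (m b c : ℝ) + 1 / (m c a : ℝ)

/-- Every 2-simplex of the complex `K` has angle sum greater than `1`, as a spherical triangle does.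
This is one half of the metric flag condition. -/
def TrianglesSpherical [DecidableEq V] (K : Set (Finset V)) (m : V → V → ℕ) : Prop :=
  ∀ ⦃a b c : V⦄, a ≠ b → b ≠ c → a ≠ c → {a, b, c} ∈ K → 1 < angleSum m a b c

theorem angleSum_rotate (m : V → V → ℕ) (a b c : V) : angleSum m b c a = angleSum m a b c := by
  unfold angleSum
  ring

theorem angleSum_swap {m : V → V → ℕ} (hm : ∀ a b, m a b = m b a) (a b c : V) :
    angleSum m b a c = angleSum m a b c := by
  unfold angleSum
  rw [hm b a, hm a c, hm c b]
  ring

theorem exists_triple_eq_and_angleSum_eq {m : V → V → ℕ} (hm : ∀ a b, m a b = m b a)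
    {a b c x y : V} (hab : a ≠ b) (hbc : b ≠ c) (hac : a ≠ c) (hx : x ∈ ({a, b, c} : Set V))
    (hy : y ∈ ({a, b, c} : Set V)) (hxy : x ≠ y) :
    ∃ z, z ≠ x ∧ z ≠ y ∧ ({a, b, c} : Set V) = {x, y, z} ∧
      angleSum m x y z = angleSum m a b c := by
  have hrot := angleSum_rotate m
  have hswap := angleSum_swap hm
  rcases hx with rfl | rfl | rfl <;> rcases hy with rfl | rfl | rfl <;> try exact absurd rfl hxy
  exacts [⟨c, by grind⟩, ⟨b, by grind⟩, ⟨c, by grind⟩, ⟨a, by grind⟩, ⟨b, by grind⟩, ⟨a, by grind⟩]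

theorem insert_pair_mem_of_mem_triple [DecidableEq V] {K : Set (Finset V)} {s x y z p q : V}
    (hxy : {s, x, y} ∈ K) (hyz : {s, y, z} ∈ K) (hzx : {s, z, x} ∈ K)
    (hp : p ∈ ({x, y, z} : Set V)) (hq : q ∈ ({x, y, z} : Set V)) (hpq : p ≠ q) :
    {s, p, q} ∈ K := by
  rcases hp with rfl | rfl | rfl <;> rcases hq with rfl | rfl | rfl <;>
    first
    | exact absurd rfl hpq
    | assumption
    | rwa [Finset.pair_comm]

end Triangles

section Link

variable {L : SimplicialComplex ℝ E3} {m : E3 → E3 → ℕ} {s : E3}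

theorem MetricFlag.trianglesSpherical (hflag : MetricFlag L m) : TrianglesSpherical L.faces m := by
  intro a b c hab hbc hac h
  refine (hflag a b c hab hbc hac ?_ ?_ ?_).1 h <;>
    exact L.down_closed h (by simp [Finset.insert_subset_iff]) (Finset.insert_nonempty _ _)

theorem mem_linkVerts_of_mem {G : Finset E3} (hG : G ∈ L.faces) {v : E3} (hs : s ∈ G) (hv : v ∈ G)
    (hvs : v ≠ s) : v ∈ linkVerts L s :=
  ⟨hvs, L.down_closed hG (by simp [Finset.insert_subset_iff, hs, hv]) (Finset.insert_nonempty _ _)⟩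

theorem IsLabeledS2.nonempty_realization_homeomorph (hL : IsLabeledS2 L m) :
    Nonempty (realization L.faces ≃ₜ Metric.sphere (0 : E3) 1) := by
  obtain ⟨e⟩ := nonempty_realization_homeomorph_space L hL.finite
  obtain ⟨e'⟩ := hL.sphere
  exact ⟨e.trans e'⟩

theorem IsLabeledS2.exists_mem_superset_not_subset_insert (hL : IsLabeledS2 L m) {σ : Finset E3}
    {c : E3} (hσ : σ.Nonempty) (hc : c ∉ σ) (hcL : insert c σ ∈ L.faces) :
    ∃ G ∈ L.faces, σ ⊆ G ∧ ¬ G ⊆ insert c σ := by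
  obtain ⟨e⟩ := hL.nonempty_realization_homeomorph
  exact CoxOrb.exists_mem_superset_not_subset_insert (fun _ hf hinj =>
    surjective_of_continuous_injective_of_homeomorph_sphere (finrank_euclideanSpace_fin (𝕜 := ℝ))
      e e hf hinj) hσ hc hcL

theorem IsThreeEuclidean.exists_linkVerts_eq (hs : IsThreeEuclidean L m s)
    (hm : ∀ a b, m a b = m b a) {x y : E3} (hx : x ∈ linkVerts L s) (hy : y ∈ linkVerts L s)
    (hxy : x ≠ y) :
    ∃ z, z ≠ x ∧ z ≠ y ∧ linkVerts L s = {x, y, z} ∧ angleSum m x y z = 1 := by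
  obtain ⟨-, a, b, c, hab, hbc, hac, hlink, hsum⟩ := hs
  rw [hlink] at hx hy ⊢
  obtain ⟨z, hzx, hzy, heq, hangle⟩ := exists_triple_eq_and_angleSum_eq hm hab hbc hac hx hy hxy
  exact ⟨z, hzx, hzy, heq, hangle.trans hsum⟩

theorem IsLabeledS2.triangle_pivot (hL : IsLabeledS2 L m) {x y z : E3}
    (hlink : linkVerts L s = {x, y, z}) (hxy : x ≠ y) (h : {s, x, y} ∈ L.faces) :
    {s, y, z} ∈ L.faces := by
  have hx : x ∈ linkVerts L s := hlink ▸ Set.mem_insert x _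
  obtain ⟨G, hG, hsub, hnot⟩ := hL.exists_mem_superset_not_subset_insert (σ := {s, y}) (c := x)
    (Finset.insert_nonempty _ _) (by simp [hx.1, hxy]) (Finset.insert_comm x s {y} ▸ h)
  obtain ⟨v, hvG, hv⟩ := Finset.not_subset.1 hnot
  simp only [Finset.mem_insert, Finset.mem_singleton, not_or] at hv
  have hvz : v ∈ linkVerts L s := mem_linkVerts_of_mem hG (hsub (by simp)) hvG hv.2.1
  obtain rfl : v = z := by simpa [hlink, hv.1, hv.2.2] using hvz
  refine L.down_closed hG ?_ (Finset.insert_nonempty _ _)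
  exact Finset.insert_subset (hsub (by simp)) (Finset.insert_subset (hsub (by simp)) (by simpa))

theorem IsThreeEuclidean.mem_of_mem_star (hs : IsThreeEuclidean L m s)
    (hsph : TrianglesSpherical L.faces m) {F : Finset E3} (hF : F ∈ star L s) (hcard : F.card = 3) :
    s ∈ F := by
  obtain ⟨-, a, b, c, hab, hbc, hac, hlink, hsum⟩ := hs
  obtain ⟨hFL, G, hG, hsG, hFG⟩ := hF
  by_contra hsF
  have hsub : F ⊆ {a, b, c} := fun v hv => by
    have := mem_linkVerts_of_mem hG hsG (hFG hv) fun h => hsF (h ▸ hv)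
    simpa [hlink] using this
  have hF : F = {a, b, c} := Finset.eq_of_subset_of_card_le hsub (hcard ▸ Finset.card_le_three)
  exact (hsph hab hbc hac (hF ▸ hFL)).ne' hsum

theorem IsThreeEuclidean.insert_pair_mem (hs : IsThreeEuclidean L m s) (hL : IsLabeledS2 L m)
    {F : Finset E3} (hF : F ∈ L.faces) (hsF : s ∈ F) (hcard : F.card = 3) {p q : E3}
    (hp : p ∈ linkVerts L s) (hq : q ∈ linkVerts L s) (hpq : p ≠ q) : {s, p, q} ∈ L.faces := by
  obtain ⟨x, y, hxy, hFs⟩ := Finset.card_eq_two.1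
    (show (F.erase s).card = 2 by rw [Finset.card_erase_of_mem hsF, hcard])
  have hlinkF : ∀ v ∈ F.erase s, v ∈ linkVerts L s := fun v hv =>
    mem_linkVerts_of_mem hF hsF (Finset.mem_of_mem_erase hv) (Finset.ne_of_mem_erase hv)
  obtain ⟨z, hzx, hzy, hlink, -⟩ := hs.exists_linkVerts_eq hL.symm
    (hlinkF x (by simp [hFs])) (hlinkF y (by simp [hFs])) hxy
  have hsxy : {s, x, y} ∈ L.faces := by rwa [← hFs, Finset.insert_erase hsF]
  have hlink' : linkVerts L s = {y, z, x} := by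
    rw [hlink, Set.insert_comm, Set.pair_comm]
  have hsyz := hL.triangle_pivot hlink hxy hsxy
  have hszx := hL.triangle_pivot hlink' hzy.symm hsyz
  rw [hlink] at hp hq
  exact insert_pair_mem_of_mem_triple hsxy hsyz hszx hp hq hpq

end Link

section RightAngledSuspension

variable {L : SimplicialComplex ℝ E3} {m : E3 → E3 → ℕ} {s t t' : E3} {T Z : Set (Finset E3)}

namespace IsRASuspData

theorem swap (hd : IsRASuspData L m T Z t t') : IsRASuspData L m T Z t' t where
  subset := hd.subset
  zsubset := hd.zsubset
  zdown := hd.zdown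
  znonempty := hd.znonempty
  tne := hd.tne.symm
  t_notin := hd.t'_notin
  t'_notin := hd.t_notin
  labels v hv := (hd.labels v hv).symm
  eq := by
    rw [hd.eq, joinSusp, joinSusp, Set.pair_comm, Set.union_right_comm]

theorem insert_mem (hd : IsRASuspData L m T Z t t') {G : Finset E3} (hG : G ∈ Z) :
    insert t G ∈ L.faces :=
  hd.subset (hd.eq ▸ .inl (.inr ⟨G, hG, rfl⟩))

theorem singleton_mem (hd : IsRASuspData L m T Z t t') {G : Finset E3} (hG : G ∈ Z) {v : E3}
    (hv : v ∈ G) : {v} ∈ Z :=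
  hd.zdown G hG {v} (Finset.singleton_subset_iff.2 hv) (Finset.singleton_nonempty v)

theorem ne_of_singleton_mem (hd : IsRASuspData L m T Z t t') {v : E3} (hv : {v} ∈ Z) : v ≠ t :=
  fun h => hd.t_notin _ hv (by simp [h])

theorem mem_linkVerts (hd : IsRASuspData L m T Z t t') {v : E3} (hv : {v} ∈ Z) :
    v ∈ linkVerts L t :=
  ⟨hd.ne_of_singleton_mem hv, hd.insert_mem hv⟩

theorem erase_mem (hd : IsRASuspData L m T Z t t') {F : Finset E3} (hF : F ∈ T)
    (hcard : 1 < F.card) : F.erase t ∈ Z ∨ F.erase t' ∈ Z := by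
  rw [hd.eq] at hF
  rcases hF with ((hF | hF) | ⟨G, hG, rfl⟩) | ⟨G, hG, rfl⟩
  · exact .inl ((Finset.erase_eq_of_notMem (hd.t_notin F hF)).symm ▸ hF)
  · rcases hF with rfl | rfl <;> simp at hcard
  · exact .inl ((Finset.erase_insert (hd.t_notin G hG)).symm ▸ hG)
  · exact .inr ((Finset.erase_insert (hd.t'_notin G hG)).symm ▸ hG)

theorem exists_singleton_mem_ne_ne (hd : IsRASuspData L m T Z t t') (hinf : InfiniteBase Z)
    {u v : E3} (huv : {u, v} ∈ Z) (hne : u ≠ v) : ∃ w, {w} ∈ Z ∧ w ≠ u ∧ w ≠ v := by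
  by_contra! h
  refine hinf.2 ⟨u, v, hne, Set.Subset.antisymm (fun F hF => ?_) ?_⟩
  · have hsub : (F : Set E3) ⊆ {u, v} := fun w hw =>
      or_iff_not_imp_left.2 (h w (hd.singleton_mem hF hw))
    have hnonempty : (F : Set E3).Nonempty := L.nonempty_of_mem_faces (hd.zsubset hF)
    rcases hnonempty.subset_pair_iff_eq.1 hsub with h | h | h
    · exact .inl (by exact_mod_cast h)
    · exact .inr (.inl (by exact_mod_cast h))
    · exact .inr (.inr (by exact_mod_cast h))
  · rintro F (rfl | rfl | rfl)
    · exact hd.singleton_mem huv (by simp)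
    · exact hd.singleton_mem huv (by simp)
    · exact huv

theorem singleton_notMem_of_isThreeEuclidean (hd : IsRASuspData L m T Z t t')
    (hs : IsThreeEuclidean L m s) (hL : IsLabeledS2 L m)
    (htri : ∀ p ∈ linkVerts L s, ∀ q ∈ linkVerts L s, p ≠ q → {s, p, q} ∈ L.faces)
    {b : E3} (hb : {b} ∈ Z) (hbs : b ∈ linkVerts L s) : {s} ∉ Z := by
  intro hsZ
  have ht : t ∈ linkVerts L s :=
    ⟨(hd.ne_of_singleton_mem hsZ).symm, Finset.pair_comm s t ▸ hd.insert_mem hsZ⟩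
  have ht' : t' ∈ linkVerts L s :=
    ⟨(hd.swap.ne_of_singleton_mem hsZ).symm, Finset.pair_comm s t' ▸ hd.swap.insert_mem hsZ⟩
  have hbt := hd.ne_of_singleton_mem hb
  have hbt' := hd.swap.ne_of_singleton_mem hb
  have htt' : {t, t'} ∈ L.faces := L.down_closed (htri t ht t' ht' hd.tne)
    (Finset.subset_insert _ _) (Finset.insert_nonempty _ _)
  have hlabel : (2 : ℝ) ≤ m t t' := by exact_mod_cast hL.two_le t t' hd.tne htt'
  obtain ⟨z, hzt, hzt', hlink, hsum⟩ := hs.exists_linkVerts_eq hL.symm ht ht' hd.tne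
  obtain rfl : b = z := by simpa [hlink, hbt, hbt'] using hbs
  obtain ⟨hmt, hmt'⟩ := hd.labels b hb
  rw [angleSum, hL.symm b t, hmt, hmt'] at hsum
  have : (0 : ℝ) < 1 / m t t' := by positivity
  push_cast at hsum
  linarith

theorem isSuspensionOfThreeGon (hd : IsRASuspData L m T Z t t') (hL : IsLabeledS2 L m)
    {b : Fin 3 → E3} (hinj : Function.Injective b) (hb : ∀ j, {b j, b (j + 1)} ∈ Z)
    (htt' : {t, t'} ∉ L.faces) : IsSuspensionOfThreeGon L := by
  have hvert : ∀ j, {b j} ∈ Z := fun j => hd.singleton_mem (hb j) (by simp)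
  have hne : ∀ j, t ≠ b j := fun j => (hd.ne_of_singleton_mem (hvert j)).symm
  have hne' : ∀ j, t' ≠ b j := fun j => (hd.swap.ne_of_singleton_mem (hvert j)).symm
  have hapex : ∀ i, ∀ G ∈ Z, insert (![t, t'] i) G ∈ L.faces :=
    Fin.forall_fin_two.2 ⟨fun _ => hd.insert_mem, fun _ => hd.swap.insert_mem⟩
  let a : Fin 2 ⊕ Fin 3 ↪ E3 := ⟨Sum.elim ![t, t'] b, Function.Injective.sumElim
    (injective_pair_iff_ne.2 hd.tne) hinj (Fin.forall_fin_two.2 ⟨hne, hne'⟩)⟩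
  obtain ⟨e⟩ := hL.nonempty_realization_homeomorph
  have hrange : ∀ v, {v} ∈ L.faces → v ∈ Set.range a := fun v hv => by
    refine mem_range_of_suspension_embedding e a ?_ hv
    rintro _ ⟨i, j, rfl⟩
    simpa [a, Finset.map_insert] using hapex i _ (hb j)
  have hapex_singleton : ∀ i, {![t, t'] i} ∈ L.faces := fun i =>
    L.down_closed (hapex i _ (hb 0)) (by simp) (Finset.singleton_nonempty _)
  refine ⟨t, t', b 0, b 1, b 2, ?_, fun v => ⟨fun hv => ?_, ?_⟩, hd.zsubset (hb 0),
    hd.zsubset (hb 1), Finset.pair_comm (b 2) (b 0) ▸ hd.zsubset (hb 2),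
    hd.insert_mem (hvert 0), hd.insert_mem (hvert 1), hd.insert_mem (hvert 2),
    hd.swap.insert_mem (hvert 0), hd.swap.insert_mem (hvert 1), hd.swap.insert_mem (hvert 2), htt'⟩
  · simp [hd.tne, hne, hne', hinj.eq_iff]
  · obtain ⟨i | j, rfl⟩ := hrange v hv
    · fin_cases i <;> simp [a]
    · fin_cases j <;> simp [a]
  · rintro (rfl | rfl | rfl | rfl | rfl)
    exacts [hapex_singleton 0, hapex_singleton 1, hd.zsubset (hvert 0), hd.zsubset (hvert 1),
      hd.zsubset (hvert 2)]

theorem isSuspensionOfThreeGon_of_isThreeEuclidean (hd : IsRASuspData L m T Z t t')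
    (hs : IsThreeEuclidean L m t) (hL : IsLabeledS2 L m)
    (htri : ∀ p ∈ linkVerts L t, ∀ q ∈ linkVerts L t, p ≠ q → {t, p, q} ∈ L.faces)
    (hinf : InfiniteBase Z) (hfull : IsFullSubcomplex L Z) {u v : E3} (huv : {u, v} ∈ Z)
    (hne : u ≠ v) : IsSuspensionOfThreeGon L := by
  obtain ⟨w, hw, hwu, hwv⟩ := hd.exists_singleton_mem_ne_ne hinf huv hne
  have hu : {u} ∈ Z := hd.singleton_mem huv (by simp)
  have hv : {v} ∈ Z := hd.singleton_mem huv (by simp)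
  have hedge : ∀ p q, {p} ∈ Z → {q} ∈ Z → p ≠ q → {p, q} ∈ Z := fun p q hp hq hpq =>
    hfull.2 _ (L.down_closed (htri p (hd.mem_linkVerts hp) q (hd.mem_linkVerts hq) hpq)
      (Finset.subset_insert _ _) (Finset.insert_nonempty _ _)) (by simp [hp, hq])
  obtain ⟨z, -, -, hlink, -⟩ := hs.exists_linkVerts_eq hL.symm (hd.mem_linkVerts hu)
    (hd.mem_linkVerts hv) hne
  obtain rfl : w = z := by simpa [hlink, hwu, hwv] using hd.mem_linkVerts hw
  refine hd.isSuspensionOfThreeGon hL (b := ![u, v, w]) ?_ ?_ fun htt' => ?_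
  · refine Fin.cons_injective_iff.2 ⟨?_, injective_pair_iff_ne.2 hwv.symm⟩
    simp [hne, hwu.symm]
  · intro j
    fin_cases j
    exacts [huv, hedge v w hv hw hwv.symm, hedge w u hw hu hwu]
  · have : t' ∈ linkVerts L t := ⟨hd.tne.symm, htt'⟩
    rw [hlink] at this
    rcases this with rfl | rfl | rfl
    · exact hd.swap.ne_of_singleton_mem hu rfl
    · exact hd.swap.ne_of_singleton_mem hv rfl
    · exact hd.swap.ne_of_singleton_mem hw rfl

theorem notMem_star_of_erase_mem (hd : IsRASuspData L m T Z t t') (hL : IsLabeledS2 L m)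
    (hsph : TrianglesSpherical L.faces m) (hnot : ¬ IsSuspensionOfThreeGon L)
    (hs : IsThreeEuclidean L m s) (hinf : InfiniteBase Z) (hfull : IsFullSubcomplex L Z)
    {F : Finset E3} (hcard : F.card = 3) (hF : F.erase t ∈ Z) : F ∉ star L s := by
  intro hstar
  have hsF : s ∈ F := hs.mem_of_mem_star hsph hstar hcard
  have htri : ∀ p ∈ linkVerts L s, ∀ q ∈ linkVerts L s, p ≠ q → {s, p, q} ∈ L.faces :=
    fun p hp q hq => hs.insert_pair_mem hL hstar.1 hsF hcard hp hq
  rcases eq_or_ne s t with rfl | hst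
  · obtain ⟨u, v, hne, huv⟩ := Finset.card_eq_two.1
      (show (F.erase s).card = 2 by rw [Finset.card_erase_of_mem hsF, hcard])
    exact hnot (hd.isSuspensionOfThreeGon_of_isThreeEuclidean hs hL htri hinf hfull (huv ▸ hF) hne)
  · have hs' : s ∈ F.erase t := Finset.mem_erase.2 ⟨hst, hsF⟩
    obtain ⟨b, hb, hbs⟩ := (F.erase t).exists_mem_ne
      (by have := F.pred_card_le_card_erase (a := t); omega) s
    have hbs : b ∈ linkVerts L s := mem_linkVerts_of_mem (hd.zsubset hF) hs' hb hbs
    exact hd.singleton_notMem_of_isThreeEuclidean hs hL htri (hd.singleton_mem hF hb) hbs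
      (hd.singleton_mem hF hs')

end IsRASuspData

end RightAngledSuspension

theorem star_threeEuclidean_rasusp_no_common_two_simplex_general
    {L : SimplicialComplex ℝ E3} {m : E3 → E3 → ℕ} (hL : IsLabeledS2 L m)
    (hsph : TrianglesSpherical L.faces m) (hnot : ¬ IsSuspensionOfThreeGon L)
    {s t t' : E3} (hs : IsThreeEuclidean L m s) {T Z : Set (Finset E3)}
    (hd : IsRASuspData L m T Z t t') (hinf : InfiniteBase Z) (hfull : IsFullSubcomplex L Z)
    {F : Finset E3} (hcard : F.card = 3) (hF : F ∈ star L s) : F ∉ T := by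
  intro hFT
  rcases hd.erase_mem hFT (by omega) with h | h
  · exact hd.notMem_star_of_erase_mem hL hsph hnot hs hinf hfull hcard h hF
  · exact hd.swap.notMem_star_of_erase_mem hL hsph hnot hs hinf hfull hcard h hF

end CoxOrb

/-- If `L` is a metric flag labeled triangulation of the 2-sphere which is not
the suspension of a 3-gon, then the closed star of a 3-Euclidean vertex and an
infinite, maximal RA-suspension contain no common 2-simplex of `L`. -/
theorem star_threeEuclidean_rasusp_no_common_two_simplex
    (L : SimplicialComplex ℝ E3) (m : E3 → E3 → ℕ)
    (hL : IsLabeledS2 L m) (hflag : MetricFlag L m)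
    (hnot : ¬ IsSuspensionOfThreeGon L)
    (s : E3) (hs : IsThreeEuclidean L m s)
    (T : Set (Finset E3)) (hT : IsInfMaxRASusp L m T) :
    ∀ F ∈ L.faces, F.card = 3 → ¬ (F ∈ star L s ∧ F ∈ T) := by
  obtain ⟨⟨Z, t, t', hd, hinf, hfull⟩, -⟩ := hT
  rintro F - hcard ⟨hstar, hFT⟩
  exact star_threeEuclidean_rasusp_no_common_two_simplex_general hL hflag.trianglesSpherical hnot
    hs hd hinf hfull hcard hstar hFT
end

section
/- Suppose L is a metric flag labeled triangulation of the 2-sphere and T is the RA-cone on a Euclidean 4-circuit C, with cone vertex c and with the vertices of C being s₀, s₁, s₂, s₃ in cyclic order. Suppose u is a vertex of L not in T joined to both opposite corners s₀ and s₂ by edges labeled 2, and v is a vertex of L not in T joined to both opposite corners s₁ and s₃ by edges labeled 2. Then u = v, L has exactly six vertices c, u, s₀, s₁, s₂, s₃, every edge of L is labeled 2, and L is the simplicial join of the 4-circuit C with the two-point set {c, u} (a right-angled octahedron). -/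
open Geometry

open CoxOrb

/-
A 2-sphere minus a point is planar, and the plane contains neither a `K₅` nor an octahedron.

If `u ≠ w`, the circuit, its two diagonals through `u` and `w`, and the four edges at `c` form a
`K₅` in the sphere which misses the barycentre of a triangle: absurd. For the non-planarity of
`K₅`, let `Λ γ y` be the change of a logarithm of `γ - y` along the path `γ`. If `γ` from `a` to `b`
and `δ` from `a'` to `b'` are disjoint, the square `(s, t) ↦ γ s - δ t` avoids `0`, so
`Λ γ a' + Λ δ b = Λ δ a + Λ γ b'`. In the sum of this identity over the fifteen pairs of disjoint
edges of `K₅` every term cancels or occurs twice; exponentiating half of the sum gives `1 = -1`.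

If `u = w`, flagness fills in the cone with apex `u` over the circuit, which together with the cone
with apex `c` is an octahedron. A face of `L` outside it would leave its barycentre uncovered, and
the octahedron would embed in the plane, which the Borsuk–Ulam theorem forbids.
-/

namespace CoxOrb

open Set Topology

section Logarithm

theorem exists_continuous_exp_eq {X : Type*} [TopologicalSpace X] [SimplyConnectedSpace X]
    [LocallyPathConnectedSpace X] {f : X → ℂ} (hf : Continuous f) (hf₀ : ∀ x, f x ≠ 0) :
    ∃ g : X → ℂ, Continuous g ∧ ∀ x, Complex.exp (g x) = f x := by
  obtain ⟨x₀⟩ : Nonempty X := inferInstance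
  obtain ⟨g, ⟨-, hg⟩, -⟩ := Complex.isCoveringMapOn_exp.existsUnique_continuousMap_lifts
    ⟨f, hf⟩ (Complex.exp_log (hf₀ x₀)) hf₀
  exact ⟨g, g.continuous, congrFun hg⟩

theorem eq_of_exp_eq {X : Type*} [TopologicalSpace X] [PreconnectedSpace X] {g : X → ℂ}
    (hg : Continuous g) (h : ∀ x y, Complex.exp (g x) = Complex.exp (g y)) (x y : X) :
    g x = g y :=
  Complex.isCoveringMap_exp.const_of_comp hg (fun x y ↦ Subtype.ext (h x y)) x y

/-- The increment over `[0, 1]` of a continuous logarithm of `f`; a junk value if there is none. -/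
noncomputable def logChange (f : ℝ → ℂ) : ℂ :=
  let g := Classical.epsilon fun g : ℝ → ℂ ↦ Continuous g ∧ ∀ t, Complex.exp (g t) = f t
  g 1 - g 0

theorem logChange_eq {f g : ℝ → ℂ} (hg : Continuous g) (hgf : ∀ t, Complex.exp (g t) = f t) :
    logChange f = g 1 - g 0 := by
  obtain ⟨hg', hgf'⟩ := Classical.epsilon_spec
    (p := fun g : ℝ → ℂ ↦ Continuous g ∧ ∀ t, Complex.exp (g t) = f t) ⟨g, hg, hgf⟩
  have hsub := eq_of_exp_eq (hg'.fun_sub hg) (fun s t ↦ by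
    rw [Complex.exp_sub, Complex.exp_sub, hgf', hgf', hgf, hgf,
      div_self (hgf s ▸ Complex.exp_ne_zero _), div_self (hgf t ▸ Complex.exp_ne_zero _)]) 1 0
  rw [logChange]
  linear_combination hsub

theorem exp_logChange {f : ℝ → ℂ} (hf : Continuous f) (hf₀ : ∀ t, f t ≠ 0) :
    Complex.exp (logChange f) = f 1 / f 0 := by
  obtain ⟨g, hg, hgf⟩ := exists_continuous_exp_eq hf hf₀
  rw [logChange_eq hg hgf, Complex.exp_sub, hgf, hgf]

theorem logChange_neg {f : ℝ → ℂ} (hf : Continuous f) (hf₀ : ∀ t, f t ≠ 0) :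
    logChange (fun t ↦ -f t) = logChange f := by
  obtain ⟨g, hg, hgf⟩ := exists_continuous_exp_eq hf hf₀
  have hneg : ∀ t, Complex.exp (g t + Real.pi * Complex.I) = -f t := fun t ↦ by
    rw [Complex.exp_add, hgf, Complex.exp_pi_mul_I, mul_neg_one]
  rw [logChange_eq hg hgf, logChange_eq (by fun_prop) hneg, add_sub_add_right_eq_sub]

theorem logChange_square {F : ℝ × ℝ → ℂ} (hF : Continuous F) (hF₀ : ∀ p, F p ≠ 0) :
    logChange (fun t ↦ F (t, 0)) + logChange (fun t ↦ F (1, t)) =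
      logChange (fun t ↦ F (0, t)) + logChange (fun t ↦ F (t, 1)) := by
  obtain ⟨g, hg, hgF⟩ := exists_continuous_exp_eq hF hF₀
  rw [logChange_eq (g := fun t ↦ g (t, 0)) (by fun_prop) fun t ↦ hgF _,
    logChange_eq (g := fun t ↦ g (1, t)) (by fun_prop) fun t ↦ hgF _,
    logChange_eq (g := fun t ↦ g (0, t)) (by fun_prop) fun t ↦ hgF _,
    logChange_eq (g := fun t ↦ g (t, 1)) (by fun_prop) fun t ↦ hgF _]
  ring

/-- The increment of a continuous logarithm of `γ - y` along the path `γ`, the complex form of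
the angle swept by `γ` as seen from `y`. -/
noncomputable def logChangeFrom {a b : ℂ} (γ : Path a b) (y : ℂ) : ℂ :=
  logChange fun t ↦ γ.extend t - y

variable {a b a' b' : ℂ}

theorem exp_logChangeFrom {γ : Path a b} {y : ℂ} (hy : y ∉ range γ) :
    Complex.exp (logChangeFrom γ y) = (b - y) / (a - y) := by
  have h₀ : ∀ t, γ.extend t - y ≠ 0 := fun t ht ↦
    hy (γ.extend_range ▸ ⟨t, sub_eq_zero.1 ht⟩)
  rw [logChangeFrom, exp_logChange (by fun_prop) h₀, γ.extend_one, γ.extend_zero]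

theorem logChangeFrom_exchange {γ : Path a b} {δ : Path a' b'}
    (h : Disjoint (range γ) (range δ)) :
    logChangeFrom γ a' + logChangeFrom δ b = logChangeFrom δ a + logChangeFrom γ b' := by
  rw [← γ.extend_range, ← δ.extend_range] at h
  have hne : ∀ s t, γ.extend s - δ.extend t ≠ 0 := fun s t ↦
    sub_ne_zero.2 (h.ne_of_mem (mem_range_self s) (mem_range_self t))
  have hδ : ∀ s, logChangeFrom δ (γ.extend s) = logChange fun t ↦ γ.extend s - δ.extend t := by
    intro s
    rw [← logChange_neg (by fun_prop) (hne s)]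
    simp only [logChangeFrom, neg_sub]
  have hsquare := logChange_square (F := fun p ↦ γ.extend p.1 - δ.extend p.2) (by fun_prop)
    fun p ↦ hne _ _
  rw [← hδ, ← hδ] at hsquare
  simpa only [logChangeFrom, Path.extend_zero, Path.extend_one] using hsquare

end Logarithm

section CompleteGraph

@[to_additive]
theorem prod_apply_add_add {G M : Type*} [Fintype G] [AddCommGroup G] [CommMonoid M]
    (f : G → G → M) (a b : G) : ∏ i, f (i + a) (i + b) = ∏ i, f i (i + (b - a)) := by
  rw [← Equiv.prod_comp (Equiv.addRight a) fun i ↦ f i (i + (b - a))]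
  simp only [Equiv.coe_addRight, add_assoc, add_sub_cancel]

theorem sum_pentagon_eq_sum_pentagram {ω η : Fin 5 → Fin 5 → ℂ}
    (hω : ∀ i, ω i (i + 2) + ω (i + 2) (i + 1) = ω (i + 2) (i + 0) + ω i (i + 3))
    (hη : ∀ i, η i (i + 1) + η (i + 1) (i + 2) = η (i + 1) (i + 0) + η i (i + 3))
    (hηω : ∀ i, η i (i + 3) + ω (i + 3) (i + 2) = ω (i + 3) (i + 0) + η i (i + 4)) :
    ∑ i, ω i (i + 4) + ∑ i, η i (i + 1) = ∑ i, ω i (i + 3) + ∑ i, η i (i + 4) := by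
  have hω' := Fintype.sum_congr _ _ hω
  have hη' := Fintype.sum_congr _ _ hη
  have hηω' := Fintype.sum_congr _ _ hηω
  simp only [Finset.sum_add_distrib, sum_apply_add_add, Fin.reduceSub] at hω' hη' hηω'
  linear_combination (1 / 2 : ℂ) * hω' + (1 / 2 : ℂ) * hη' + (1 / 2 : ℂ) * hηω'

variable {z : Fin 5 → ℂ}

theorem exp_sum_logChangeFrom {k l : Fin 5} {γ : ∀ i, Path (z i) (z (i + l))}
    (h : ∀ i, z (i + k) ∉ range (γ i)) :
    Complex.exp (∑ i, logChangeFrom (γ i) (z (i + k))) =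
      (∏ i, (z i - z (i + (k - l)))) / ∏ i, (z i - z (i + k)) := by
  simp only [Complex.exp_sum, exp_logChangeFrom (h _), Finset.prod_div_distrib,
    prod_apply_add_add fun i j ↦ z i - z j]

theorem prod_sub_translate_neg (k : Fin 5) :
    ∏ i, (z i - z (i + -k)) = -∏ i, (z i - z (i + k)) := calc
  _ = ∏ i, (z (i + k) - z i) := by
    simpa using (prod_apply_add_add (fun i j ↦ z i - z j) k 0).symm
  _ = ∏ i, -(z i - z (i + k)) := by simp only [neg_sub]
  _ = -∏ i, (z i - z (i + k)) := by
    rw [Finset.prod_neg, Finset.card_fin, Odd.neg_one_pow (by decide), neg_one_mul]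

theorem not_disjoint_completeGraph_five_paths
    (α : ∀ i, Path (z i) (z (i + 1))) (β : ∀ i, Path (z i) (z (i + 2)))
    (hα : ∀ i, Disjoint (range (α i)) (range (α (i + 2))))
    (hβ : ∀ i, Disjoint (range (β i)) (range (β (i + 1))))
    (hβα : ∀ i, Disjoint (range (β i)) (range (α (i + 3)))) : False := by
  have h := congrArg Complex.exp <| sum_pentagon_eq_sum_pentagram
    (ω := fun i j ↦ logChangeFrom (α i) (z j)) (η := fun i j ↦ logChangeFrom (β i) (z j))
    (fun i ↦ by simpa [add_assoc] using logChangeFrom_exchange (hα i))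
    (fun i ↦ by simpa [add_assoc] using logChangeFrom_exchange (hβ i))
    (fun i ↦ by simpa [add_assoc] using logChangeFrom_exchange (hβα i))
  have hα₃ (i) : z (i + 3) ∉ range (α i) := fun hi ↦
    (hα i).notMem_of_mem_left hi ⟨1, by simp [add_assoc]⟩
  have hα₄ (i) : z (i + 4) ∉ range (α i) := by
    obtain ⟨j, rfl⟩ : ∃ j, i = j + 2 := ⟨i + 3, by simp [add_assoc]⟩
    exact (hα j).notMem_of_mem_left ⟨1, by simp [add_assoc]⟩
  have hβ₁ (i) : z (i + 1) ∉ range (β i) := fun hi ↦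
    (hβ i).notMem_of_mem_left hi ⟨0, (β (i + 1)).source⟩
  have hβ₄ (i) : z (i + 4) ∉ range (β i) := fun hi ↦
    (hβα i).notMem_of_mem_left hi ⟨1, by simp [add_assoc]⟩
  have h₄ : ∏ i, (z i - z (i + 4)) = -∏ i, (z i - z (i + 1)) := prod_sub_translate_neg 1
  have h₃ : ∏ i, (z i - z (i + 3)) = -∏ i, (z i - z (i + 2)) := prod_sub_translate_neg 2
  have h₁ : ∏ i, (z i - z (i + 1)) ≠ 0 :=
    (div_ne_zero_iff.1 <| exp_sum_logChangeFrom hβ₁ ▸ Complex.exp_ne_zero _).2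
  have h₂ : ∏ i, (z i - z (i + 2)) ≠ 0 :=
    (div_ne_zero_iff.1 <| exp_sum_logChangeFrom hα₃ ▸ Complex.exp_ne_zero _).1
  rw [Complex.exp_add, Complex.exp_add, exp_sum_logChangeFrom hα₄, exp_sum_logChangeFrom hβ₁,
    exp_sum_logChangeFrom hα₃, exp_sum_logChangeFrom hβ₄] at h
  simp only [Fin.reduceSub, h₃, h₄] at h
  field_simp at h
  norm_num at h

end CompleteGraph

section Planar

variable {X : Type*} [TopologicalSpace X] {Y : Set X}

/-- A subset of a topological space is planar if it admits a continuous injection into the plane.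
The injection is encoded as a function on the whole space, arbitrary outside the subset. -/
def IsPlanar (Y : Set X) : Prop :=
  ∃ H : X → ℂ, ContinuousOn H Y ∧ InjOn H Y

theorem isPlanar_sdiff_singleton (e : Y ≃ₜ Metric.sphere (0 : EuclideanSpace ℝ (Fin 3)) 1)
    {p : X} (hp : p ∈ Y) : IsPlanar (Y \ {p}) := by
  have : Fact (Module.finrank ℝ (EuclideanSpace ℝ (Fin 3)) = 2 + 1) := ⟨by simp⟩
  let S := stereographic' 2 (e ⟨p, hp⟩)
  let ι := Complex.orthonormalBasisOneI.repr.symm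
  have hS {x : X} (hx : x ∈ Y \ {p}) : e ⟨x, hx.1⟩ ∈ S.source := by
    simpa [S, Subtype.ext_iff] using hx.2
  let H : X → ℂ := Function.extend Subtype.val (fun x : Y ↦ ι (S (e x))) 0
  have hH {x : X} (hx : x ∈ Y \ {p}) : H x = ι (S (e ⟨x, hx.1⟩)) :=
    Subtype.val_injective.extend_apply _ _ (⟨x, hx.1⟩ : Y)
  refine ⟨H, ?_, fun x hx y hy hxy ↦ ?_⟩
  · rw [continuousOn_iff_continuous_domRestrict]
    refine (ι.continuous.comp <| S.continuousOn.comp_continuous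
      (e.continuous.comp (continuous_inclusion sdiff_subset)) fun x ↦ hS x.2).congr fun x ↦ ?_
    exact (hH x.2).symm
  · rw [hH hx, hH hy] at hxy
    exact congrArg Subtype.val (e.injective (S.injOn (hS hx) (hS hy) (ι.injective hxy)))

theorem IsPlanar.not_disjoint_completeGraph_five (hY : IsPlanar Y) {z : Fin 5 → X}
    {A B : Fin 5 → Set X} (hAY : ∀ i, A i ⊆ Y) (hBY : ∀ i, B i ⊆ Y)
    (hA : ∀ i, JoinedIn (A i) (z i) (z (i + 1))) (hB : ∀ i, JoinedIn (B i) (z i) (z (i + 2)))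
    (hAA : ∀ i, Disjoint (A i) (A (i + 2))) (hBB : ∀ i, Disjoint (B i) (B (i + 1)))
    (hBA : ∀ i, Disjoint (B i) (A (i + 3))) : False := by
  obtain ⟨H, hHc, hHi⟩ := hY
  have image_disjoint {C D : Set X} (hC : C ⊆ Y) (hD : D ⊆ Y) (h : Disjoint C D) :
      Disjoint (H '' C) (H '' D) := by
    rw [disjoint_iff_inter_eq_empty, ← hHi.image_inter hC hD, h.inter_eq, image_empty]
  have hHA (i) : JoinedIn (H '' A i) (H (z i)) (H (z (i + 1))) :=
    (hA i).map_continuousOn (hHc.mono (hAY i))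
  have hHB (i) : JoinedIn (H '' B i) (H (z i)) (H (z (i + 2))) :=
    (hB i).map_continuousOn (hHc.mono (hBY i))
  have hα (i) : range (hHA i).somePath ⊆ H '' A i := range_subset_iff.2 (hHA i).somePath_mem
  have hβ (i) : range (hHB i).somePath ⊆ H '' B i := range_subset_iff.2 (hHB i).somePath_mem
  exact not_disjoint_completeGraph_five_paths (z := fun i ↦ H (z i))
    (fun i ↦ (hHA i).somePath) (fun i ↦ (hHB i).somePath)
    (fun i ↦ (image_disjoint (hAY _) (hAY _) (hAA i)).mono (hα _) (hα _))
    (fun i ↦ (image_disjoint (hBY _) (hBY _) (hBB i)).mono (hβ _) (hβ _))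
    (fun i ↦ (image_disjoint (hBY _) (hAY _) (hBA i)).mono (hβ _) (hα _))

end Planar

section Cone

theorem exists_eq_zero_of_odd_on_circle {F : ℂ → ℂ} (hF : Continuous F)
    (hodd : ∀ z, ‖z‖ = 1 → F (-z) = -F z) : ∃ z, F z = 0 := by
  by_contra! hF₀
  obtain ⟨g, hg, hgF⟩ := exists_continuous_exp_eq hF hF₀
  let k : ℝ → ℂ := fun θ ↦ g (-Complex.exp (θ * Complex.I)) - g (Complex.exp (θ * Complex.I))
  have hk (θ : ℝ) : Complex.exp (k θ) = -1 := by
    rw [Complex.exp_sub, hgF, hgF, hodd _ (Complex.norm_exp_ofReal_mul_I θ), neg_div_self (hF₀ _)]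
  have hconst : k 0 = k Real.pi := eq_of_exp_eq (by fun_prop) (fun s t ↦ by rw [hk, hk]) 0 Real.pi
  have hpi : k Real.pi = -k 0 := by simp [k]
  have hk₀ := hk 0
  rw [self_eq_neg.1 (hconst.trans hpi), Complex.exp_zero] at hk₀
  norm_num at hk₀

variable {E : Type*} [AddCommGroup E] [Module ℝ E]

/-- The map from the plane onto the cone with apex `d` over the closed polygon
`v 0, v 1, v 2, v 3`: the `ℓ¹` unit ball is mapped affinely on each quadrant, `0` to `d` and
`I ^ i` to `v i`, and its complement is first retracted radially onto its boundary. -/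
noncomputable def coneMap (v : Fin 4 → E) (d : E) (z : ℂ) : E :=
  (max 1 (|z.re| + |z.im|))⁻¹ • ((max 1 (|z.re| + |z.im|) - (|z.re| + |z.im|)) • d +
    z.re⁺ • v 0 + z.im⁺ • v 1 + z.re⁻ • v 2 + z.im⁻ • v 3)

variable {v : Fin 4 → E} {c d u : E} {z : ℂ}

theorem continuous_coneMap [TopologicalSpace E] [IsTopologicalAddGroup E] [ContinuousSMul ℝ E] :
    Continuous (coneMap v d) := by
  have hN : ∀ z : ℂ, max 1 (|z.re| + |z.im|) ≠ 0 := fun z ↦ by positivity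
  unfold coneMap
  fun_prop (disch := exact hN)

theorem coneMap_eq_of_one_le (hz : 1 ≤ |z.re| + |z.im|) : coneMap v c z = coneMap v u z := by
  simp [coneMap, max_eq_right hz]

theorem coneMap_I_mul : coneMap v d (Complex.I * z) = coneMap (fun i ↦ v (i + 1)) d z := by
  simp only [coneMap, Complex.I_mul_re, Complex.I_mul_im, abs_neg, posPart_neg, negPart_neg,
    add_comm |z.im|, Fin.reduceAdd, zero_add]
  module

theorem inv_smul_mem_convexHull_triple {a b : E} {r s t : ℝ} (hr : 0 ≤ r) (hs : 0 ≤ s)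
    (ht : 0 ≤ t) (h : 0 < r + s + t) :
    (r + s + t)⁻¹ • (r • d + s • a + t • b) ∈ convexHull ℝ {d, a, b} := by
  have hmem := Finset.univ.centerMass_mem_convexHull (w := ![r, s, t]) (z := ![d, a, b])
    (s := {d, a, b}) (R := ℝ)
    (by simp [Fin.forall_fin_succ, hr, hs, ht]) (by simpa [Fin.sum_univ_three])
    (by simp [Fin.forall_fin_succ])
  simpa [Finset.centerMass, Fin.sum_univ_three] using hmem

theorem coneMap_mem_convexHull (hre : 0 ≤ z.re) (him : 0 ≤ z.im) :
    coneMap v d z ∈ convexHull ℝ {d, v 0, v 1} := by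
  have h := inv_smul_mem_convexHull_triple (d := d) (a := v 0) (b := v 1)
    (r := max 1 (z.re + z.im) - (z.re + z.im)) (sub_nonneg.2 (le_max_right _ _)) hre him
    (by rw [add_assoc, sub_add_cancel]; positivity)
  rw [add_assoc _ z.re, sub_add_cancel] at h
  simpa [coneMap, abs_of_nonneg, posPart_of_nonneg, negPart_of_nonneg, hre, him] using h

open scoped Fin.CommRing in
theorem coneMap_I_pow_mul_mem_convexHull (hre : 0 ≤ z.re) (him : 0 ≤ z.im) (i : ℕ) :
    coneMap v d (Complex.I ^ i * z) ∈ convexHull ℝ {d, v (i : Fin 4), v ((i : Fin 4) + 1)} := by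
  induction i generalizing v with
  | zero => simpa using coneMap_mem_convexHull hre him
  | succ i ih => simpa [pow_succ', mul_assoc, coneMap_I_mul] using ih (v := fun i ↦ v (i + 1))

theorem exists_I_pow_mul_of_nonneg (z : ℂ) :
    ∃ (i : ℕ) (w : ℂ), 0 ≤ w.re ∧ 0 ≤ w.im ∧ z = Complex.I ^ i * w := by
  rcases le_total 0 z.re with hre | hre <;> rcases le_total 0 z.im with him | him
  · exact ⟨0, z, hre, him, by simp⟩
  · exact ⟨3, Complex.I * z, by simpa, by simpa, by linear_combination (-z) * Complex.I_pow_four⟩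
  · exact ⟨1, -Complex.I * z, by simpa, by simpa, by linear_combination z * Complex.I_sq⟩
  · exact ⟨2, -z, by simpa, by simpa, by linear_combination z * Complex.I_sq⟩

open scoped Fin.CommRing in
theorem not_isPlanar_octahedron [TopologicalSpace E] [IsTopologicalAddGroup E]
    [ContinuousSMul ℝ E] {Y : Set E} (hc : ∀ i, convexHull ℝ {c, v i, v (i + 1)} ⊆ Y)
    (hu : ∀ i, convexHull ℝ {u, v i, v (i + 1)} ⊆ Y)
    (hcu : ∀ i, Disjoint (convexHull ℝ {c, v i, v (i + 1)})
      (convexHull ℝ {u, v (i + 2), v (i + 2 + 1)})) : ¬ IsPlanar Y := by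
  rintro ⟨H, hHc, hHi⟩
  have mem_Y {d : E} (hd : ∀ i, convexHull ℝ {d, v i, v (i + 1)} ⊆ Y) (z : ℂ) :
      coneMap v d z ∈ Y := by
    obtain ⟨i, w, hre, him, rfl⟩ := exists_I_pow_mul_of_nonneg z
    exact hd i (coneMap_I_pow_mul_mem_convexHull hre him i)
  have ne_antipode (z : ℂ) : coneMap v c z ≠ coneMap v u (-z) := by
    obtain ⟨i, w, hre, him, rfl⟩ := exists_I_pow_mul_of_nonneg z
    refine (hcu i).ne_of_mem (coneMap_I_pow_mul_mem_convexHull hre him i) ?_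
    rw [show -(Complex.I ^ i * w) = Complex.I ^ (i + 2) * w by rw [pow_add, Complex.I_sq]; ring]
    simpa only [Nat.cast_add, Nat.cast_ofNat] using
      coneMap_I_pow_mul_mem_convexHull (v := v) (d := u) hre him (i + 2)
  have hcont {d : E} (hd : ∀ z, coneMap v d z ∈ Y) : Continuous fun z ↦ H (coneMap v d z) :=
    hHc.comp_continuous continuous_coneMap hd
  obtain ⟨z, hz⟩ := exists_eq_zero_of_odd_on_circle
    (F := fun z ↦ H (coneMap v c z) - H (coneMap v u (-z)))
    ((hcont (mem_Y hc)).sub ((hcont (mem_Y hu)).comp continuous_neg)) fun z hz ↦ by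
      have h₁ : 1 ≤ |z.re| + |z.im| := hz ▸ Complex.norm_le_abs_re_add_abs_im z
      have h₂ : 1 ≤ |(-z).re| + |(-z).im| := by simpa using h₁
      rw [neg_neg, coneMap_eq_of_one_le (c := c) (u := u) h₁,
        coneMap_eq_of_one_le (c := c) (u := u) h₂, neg_sub]
  exact ne_antipode z (hHi (mem_Y hc z) (mem_Y hu (-z)) (sub_eq_zero.1 hz))

end Cone

section SimplicialComplex

variable {𝕜 E : Type*} [Field 𝕜] [LinearOrder 𝕜] [AddCommGroup E] [Module 𝕜 E]
  {L : SimplicialComplex 𝕜 E} {F G : Finset E}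

theorem disjoint_convexHull_of_disjoint (hF : F ∈ L.faces) (hG : G ∈ L.faces)
    (h : Disjoint F G) : Disjoint (convexHull 𝕜 (F : Set E)) (convexHull 𝕜 (G : Set E)) := by
  rw [disjoint_iff_inter_eq_empty, L.convexHull_inter_convexHull hF hG,
    (Finset.disjoint_coe.2 h).inter_eq, convexHull_empty]

theorem subset_of_centroid_mem_convexHull [IsStrictOrderedRing 𝕜] (hF : F ∈ L.faces)
    (hG : G ∈ L.faces) (h : F.centroid 𝕜 id ∈ convexHull 𝕜 (G : Set E)) : F ⊆ G := by
  intro x hx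
  by_contra hxG
  have hne := L.nonempty_of_mem_faces hF
  have hspan : F.centroid 𝕜 id ∈ affineSpan 𝕜 (F ∩ G : Set E) :=
    convexHull_subset_affineSpan _ <| L.inter_subset_convexHull hF hG
      ⟨F.centroid_mem_convexHull hne, h⟩
  rw [← Subtype.image_preimage_coe, ← Finset.centroid_univ 𝕜 F, Finset.centroid_def] at hspan
  have hweight := (L.indep hF).eq_zero_of_affineCombination_mem_affineSpan
    (Finset.sum_centroidWeights_eq_one_of_nonempty 𝕜 _ ⟨⟨x, hx⟩, Finset.mem_univ _⟩) hspan
    (Finset.mem_univ ⟨x, hx⟩) hxG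
  simp only [Finset.centroidWeights_apply, inv_eq_zero, Nat.cast_eq_zero, Finset.card_eq_zero,
    Finset.univ_eq_attach, Finset.attach_eq_empty_iff] at hweight
  exact hne.ne_empty hweight

end SimplicialComplex

section Sphere

variable {E : Type*} [AddCommGroup E] [Module ℝ E] {L : SimplicialComplex ℝ E}

theorem convexHull_subset_space_sdiff_centroid {F G : Finset E} (hF : F ∈ L.faces)
    (hG : G ∈ L.faces) (h : ¬ F ⊆ G) :
    convexHull ℝ (G : Set E) ⊆ L.space \ {F.centroid ℝ id} :=
  subset_sdiff_singleton (L.convexHull_subset_space hG) fun hmem ↦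
    h (subset_of_centroid_mem_convexHull hF hG hmem)

variable [TopologicalSpace E]

theorem isPlanar_space_sdiff_centroid {F : Finset E}
    (e : L.space ≃ₜ Metric.sphere (0 : EuclideanSpace ℝ (Fin 3)) 1) (hF : F ∈ L.faces) :
    IsPlanar (L.space \ {F.centroid ℝ id}) :=
  isPlanar_sdiff_singleton e <|
    L.convexHull_subset_space hF (F.centroid_mem_convexHull (L.nonempty_of_mem_faces hF))

variable [DecidableEq E] [IsTopologicalAddGroup E] [ContinuousSMul ℝ E]

theorem not_disjoint_completeGraph_five_faces
    (e : L.space ≃ₜ Metric.sphere (0 : EuclideanSpace ℝ (Fin 3)) 1)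
    {F : Finset E} (hF : F ∈ L.faces) (hcard : 2 < F.card) {z y : Fin 5 → E}
    (hz : ∀ i, {z i, z (i + 1)} ∈ L.faces) (hzy : ∀ i, {z i, y i} ∈ L.faces)
    (hyz : ∀ i, {y i, z (i + 2)} ∈ L.faces)
    (hzz : ∀ i, Disjoint ({z i, z (i + 1)} : Finset E) {z (i + 2), z (i + 2 + 1)})
    (hyy : ∀ i, Disjoint ({z i, y i, z (i + 2)} : Finset E)
      {z (i + 1), y (i + 1), z (i + 1 + 2)})
    (hyzz : ∀ i, Disjoint ({z i, y i, z (i + 2)} : Finset E) {z (i + 3), z (i + 3 + 1)}) :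
    False := by
  let A i := segment ℝ (z i) (z (i + 1))
  let B i := segment ℝ (z i) (y i) ∪ segment ℝ (y i) (z (i + 2))
  have joined (a b : E) : JoinedIn (segment ℝ a b) a b := .of_segment_subset subset_rfl
  have segment_disjoint {a b c d : E} (hab : {a, b} ∈ L.faces) (hcd : {c, d} ∈ L.faces)
      (h : Disjoint ({a, b} : Finset E) {c, d}) : Disjoint (segment ℝ a b) (segment ℝ c d) := by
    simpa [convexHull_pair] using disjoint_convexHull_of_disjoint hab hcd h
  have segment_subset {a b : E} (hab : {a, b} ∈ L.faces) :
      segment ℝ a b ⊆ L.space \ {F.centroid ℝ id} := by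
    simpa [convexHull_pair] using convexHull_subset_space_sdiff_centroid hF hab fun h ↦
      (Finset.card_le_two.trans_lt hcard).not_ge (Finset.card_le_card h)
  have left_subset (i) : ({z i, y i} : Finset E) ⊆ {z i, y i, z (i + 2)} :=
    Finset.insert_subset_insert _ (by simp)
  have right_subset (i) : ({y i, z (i + 2)} : Finset E) ⊆ {z i, y i, z (i + 2)} :=
    Finset.subset_insert _ _
  refine (isPlanar_space_sdiff_centroid e hF).not_disjoint_completeGraph_five (A := A) (B := B)
    (fun i ↦ segment_subset (hz i))
    (fun i ↦ union_subset (segment_subset (hzy i)) (segment_subset (hyz i)))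
    (fun i ↦ joined _ _)
    (fun i ↦ ((joined _ _).mono subset_union_left).trans ((joined _ _).mono subset_union_right))
    (fun i ↦ segment_disjoint (hz i) (hz _) (hzz i)) (fun i ↦ ?_) (fun i ↦ ?_)
  · refine (Disjoint.union_right ?_ ?_).union_left (Disjoint.union_right ?_ ?_)
    all_goals
      refine segment_disjoint (by simp only [hzy, hyz]) (by simp only [hzy, hyz])
        ((hyy i).mono ?_ ?_)
      all_goals simp only [left_subset, right_subset]
  · exact (segment_disjoint (hzy i) (hz _) ((hyzz i).mono_left (left_subset i))).union_left
      (segment_disjoint (hyz i) (hz _) ((hyzz i).mono_left (right_subset i)))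

end Sphere

section Octahedron

variable {E : Type*} [DecidableEq E]

/-- The faces of the octahedron with apices `c` and `u` over the 4-circuit `v`, that is, of the
simplicial join of the circuit with the two-point set `{c, u}`. -/
def octahedron (c u : E) (v : Fin 4 → E) : Set (Finset E) :=
  {F | F.Nonempty ∧ ∃ d ∈ ({c, u} : Set E), ∃ i, F ⊆ {d, v i, v (i + 1)}}

variable {c u w : E} {v : Fin 4 → E}

theorem singleton_mem_octahedron {x : E} :
    {x} ∈ octahedron c u v ↔ x ∈ ({c, u, v 0, v 1, v 2, v 3} : Set E) := by
  simp only [octahedron, mem_insert_iff, mem_singleton_iff, Fin.exists_fin_succ, IsEmpty.exists_iff,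
    Fin.succ_zero_eq_one, Fin.succ_one_eq_two, Fin.reduceSucc, Fin.reduceAdd, or_false, zero_add,
    exists_eq_or_imp, exists_eq_left, mem_ofPred_eq, Finset.singleton_nonempty, true_and,
    Finset.singleton_subset_iff, Finset.mem_insert, Finset.mem_singleton]
  grind

theorem label_eq_two_of_mem_octahedron {m : E → E → ℕ} (hm : ∀ s t, m s t = m t s)
    (hvv : ∀ i, m (v i) (v (i + 1)) = 2) (hcv : ∀ i, m c (v i) = 2) (huv : ∀ i, m u (v i) = 2)
    {a b : E} (hab : a ≠ b) (h : {a, b} ∈ octahedron c u v) : m a b = 2 := by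
  obtain ⟨-, d, hd, i, hF⟩ := h
  have hdv : ∀ i, m d (v i) = 2 := by rcases hd with rfl | rfl <;> assumption
  simp only [Finset.insert_subset_iff, Finset.singleton_subset_iff, Finset.mem_insert,
    Finset.mem_singleton] at hF
  grind

theorem disjoint_opposite_triangles (hv : v.Injective) (hcv : c ∉ range v) (huv : u ∉ range v)
    (hcu : c ≠ u) (i : Fin 4) :
    Disjoint ({c, v i, v (i + 1)} : Finset E) {u, v (i + 2), v (i + 2 + 1)} := by
  have hcv' (j) : c ≠ v j := fun h ↦ hcv ⟨j, h.symm⟩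
  have huv' (j) : v j ≠ u := fun h ↦ huv ⟨j, h⟩
  simp [Finset.disjoint_left, hcv', huv', hcu, hv.eq_iff, add_assoc]

variable [AddCommGroup E] [Module ℝ E] [TopologicalSpace E] [IsTopologicalAddGroup E]
  [ContinuousSMul ℝ E] {L : SimplicialComplex ℝ E}

theorem faces_eq_octahedron
    (e : L.space ≃ₜ Metric.sphere (0 : EuclideanSpace ℝ (Fin 3)) 1) (hv : v.Injective)
    (hcv : c ∉ range v) (huv : u ∉ range v) (hcu : c ≠ u)
    (hc : ∀ i, {c, v i, v (i + 1)} ∈ L.faces) (hu : ∀ i, {u, v i, v (i + 1)} ∈ L.faces) :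
    L.faces = octahedron c u v := by
  refine Subset.antisymm (fun F hF ↦ ⟨L.nonempty_of_mem_faces hF, ?_⟩) ?_
  · by_contra! hcover
    have avoids {d : E} (hd : d ∈ ({c, u} : Set E)) (hT : ∀ i, {d, v i, v (i + 1)} ∈ L.faces)
        (i) : convexHull ℝ {d, v i, v (i + 1)} ⊆ L.space \ {F.centroid ℝ id} := by
      simpa using convexHull_subset_space_sdiff_centroid hF (hT i) (hcover d hd i)
    refine not_isPlanar_octahedron (avoids (.inl rfl) hc) (avoids (.inr rfl) hu) (fun i ↦ ?_)
      (isPlanar_space_sdiff_centroid e hF)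
    simpa using disjoint_convexHull_of_disjoint (hc i) (hu _)
      (disjoint_opposite_triangles hv hcv huv hcu i)
  · rintro F ⟨hne, d, rfl | rfl, i, hFd⟩
    exacts [L.down_closed (hc i) hFd hne, L.down_closed (hu i) hFd hne]

theorem eq_of_adjacent_opposite
    (e : L.space ≃ₜ Metric.sphere (0 : EuclideanSpace ℝ (Fin 3)) 1) (hv : v.Injective)
    (hcv : c ∉ range v) (huv : u ∉ range v) (hwv : w ∉ range v) (hcu : c ≠ u) (hcw : c ≠ w)
    (hc : ∀ i, {c, v i, v (i + 1)} ∈ L.faces)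
    (hu0 : {u, v 0} ∈ L.faces) (hu2 : {u, v 2} ∈ L.faces)
    (hw1 : {w, v 1} ∈ L.faces) (hw3 : {w, v 3} ∈ L.faces) : u = w := by
  by_contra! huw
  have apex (i) : {c, v i} ∈ L.faces :=
    L.down_closed (hc i) (by simp [Finset.insert_subset_iff]) (by simp)
  have apex_symm (i) : {v i, c} ∈ L.faces := Finset.pair_comm c (v i) ▸ apex i
  have circuit (i) : {v i, v (i + 1)} ∈ L.faces := L.down_closed (hc i) (by simp) (by simp)
  have vertex (i) : {v i, v i} ∈ L.faces := L.down_closed (hc i) (by simp) (by simp)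
  have apex_vertex : {c, c} ∈ L.faces := L.down_closed (hc 0) (by simp) (by simp)
  have c_ne (i) : c ≠ v i := fun h ↦ hcv ⟨i, h.symm⟩
  have u_ne (i) : u ≠ v i := fun h ↦ huv ⟨i, h.symm⟩
  have w_ne (i) : w ≠ v i := fun h ↦ hwv ⟨i, h.symm⟩
  have hcard : 2 < ({c, v 0, v 1} : Finset E).card := by
    simp [Finset.card_insert_of_notMem, c_ne, hv.eq_iff]
  refine not_disjoint_completeGraph_five_faces e (hc 0) hcard (z := ![c, v 0, v 1, v 2, v 3])
    (y := ![c, u, w, v 2, v 3]) ?_ ?_ ?_ ?_ ?_ ?_ <;> intro i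
  · fin_cases i
    exacts [apex 0, circuit 0, circuit 1, circuit 2, apex_symm 3]
  · fin_cases i
    exacts [apex_vertex, Finset.pair_comm u _ ▸ hu0, Finset.pair_comm w _ ▸ hw1, vertex 2, vertex 3]
  · fin_cases i
    exacts [apex 1, hu2, hw3, apex_symm 2, circuit 3]
  all_goals fin_cases i <;>
    simp [c_ne, (c_ne _).symm, u_ne, (u_ne _).symm, w_ne, (w_ne _).symm, hv.eq_iff, hcu, hcu.symm,
      hcw, huw.symm]

end Octahedron

section RightAngledFlag

variable {E : Type*} [DecidableEq E] [AddCommGroup E] [Module ℝ E]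

/-- The part of the metric flag condition that concerns right angles: three pairwise adjacent
vertices span a triangle if all three edges between them are labeled `2`. -/
def IsRightAngledFlag (L : SimplicialComplex ℝ E) (m : E → E → ℕ) : Prop :=
  ∀ s t r, s ≠ t → t ≠ r → s ≠ r → {s, t} ∈ L.faces → {t, r} ∈ L.faces → {s, r} ∈ L.faces →
    m s t = 2 → m t r = 2 → m r s = 2 → {s, t, r} ∈ L.faces

theorem IsRightAngledFlag.cone_mem_faces {L : SimplicialComplex ℝ E} {m : E → E → ℕ}
    {v : Fin 4 → E} {u : E} (hflag : IsRightAngledFlag L m) (hm : ∀ s t, m s t = m t s)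
    (hv : v.Injective) (huv : u ∉ range v) (hvv : ∀ i, {v i, v (i + 1)} ∈ L.faces)
    (hmvv : ∀ i, m (v i) (v (i + 1)) = 2) (hu : ∀ i, {u, v i} ∈ L.faces)
    (hmu : ∀ i, m u (v i) = 2) (i : Fin 4) : {u, v i, v (i + 1)} ∈ L.faces :=
  have u_ne (j) : u ≠ v j := fun h ↦ huv ⟨j, h.symm⟩
  hflag u (v i) (v (i + 1)) (u_ne i) (hv.ne (by simp)) (u_ne _) (hu i) (hvv i) (hu _) (hmu i)
    (hmvv i) (hm u _ ▸ hmu _)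

end RightAngledFlag

theorem subset_pair_iff_of_nonempty {α : Type*} [DecidableEq α] {F : Finset α} {a b : α}
    (hF : F.Nonempty) : F ⊆ {a, b} ↔ F = {a} ∨ F = {b} ∨ F = {a, b} := by
  simpa only [← Finset.coe_insert, ← Finset.coe_singleton, Finset.coe_subset, Finset.coe_inj] using
    (Finset.coe_nonempty.2 hF).subset_pair_iff_eq (a := a) (b := b)

theorem mem_circuitComplex {v : Fin 4 → E3} {F : Finset E3} :
    F ∈ circuitComplex v ↔ F.Nonempty ∧ ∃ i, F ⊆ {v i, v (i + 1)} := by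
  refine ⟨?_, fun ⟨hne, i, hF⟩ ↦ ?_⟩
  · rintro (⟨i, rfl⟩ | ⟨i, rfl⟩)
    exacts [⟨by simp, i, by simp⟩, ⟨by simp, i, subset_rfl⟩]
  · obtain rfl | rfl | rfl := (subset_pair_iff_of_nonempty hne).1 hF
    exacts [.inl ⟨i, rfl⟩, .inl ⟨i + 1, rfl⟩, .inr ⟨i, rfl⟩]

theorem joinSusp_circuitComplex (c u : E3) (v : Fin 4 → E3) :
    joinSusp (circuitComplex v) c u = octahedron c u v := by
  ext F
  have hjoin : F ∈ joinSusp (circuitComplex v) c u ↔ F ∈ circuitComplex v ∨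
      ∃ d ∈ ({c, u} : Set E3), F = {d} ∨ ∃ G ∈ circuitComplex v, insert d G = F := by
    simp only [joinSusp, mem_union, mem_image, mem_insert_iff, mem_singleton_iff,
      exists_eq_or_imp, exists_eq_left, or_assoc, or_left_comm (a := _ = {u})]
  rw [hjoin]
  simp only [mem_circuitComplex]
  constructor
  · rintro (⟨hne, i, hF⟩ | ⟨d, hd, rfl | ⟨G, ⟨-, i, hG⟩, rfl⟩⟩)
    · exact ⟨hne, c, .inl rfl, i, hF.trans (Finset.subset_insert _ _)⟩
    · exact ⟨by simp, d, hd, 0, by simp⟩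
    · exact ⟨by simp, d, hd, i, Finset.insert_subset_insert d hG⟩
  · rintro ⟨hne, d, hd, i, hF⟩
    rw [Finset.subset_insert_iff] at hF
    by_cases hdF : d ∈ F
    · obtain hempty | herase := (F.erase d).eq_empty_or_nonempty
      · have := (Finset.erase_eq_empty_iff F d).1 hempty
        exact .inr ⟨d, hd, .inl (this.resolve_left hne.ne_empty)⟩
      · exact .inr ⟨d, hd, .inr ⟨F.erase d, ⟨herase, i, hF⟩, Finset.insert_erase hdF⟩⟩
    · exact .inl ⟨hne, i, Finset.erase_eq_of_notMem hdF ▸ hF⟩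

theorem rightAngledFlag_of_metricFlag {L : SimplicialComplex ℝ E3} {m : E3 → E3 → ℕ}
    (h : MetricFlag L m) : IsRightAngledFlag L m := by
  intro s t r hst htr hsr fst ftr fsr mst mtr mrs
  refine (h s t r hst htr hsr fst ftr fsr).2 ?_
  rw [mst, mtr, mrs]
  norm_num

theorem notMem_range_of_linkVerts {L : SimplicialComplex ℝ E3} {c : E3} {v : Fin 4 → E3}
    (h : linkVerts L c = {v 0, v 1, v 2, v 3}) : c ∉ range v := by
  rintro ⟨i, hi⟩
  have hmem : v i ∈ linkVerts L c := by rw [h]; fin_cases i <;> simp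
  exact hmem.1 hi

theorem ne_and_notMem_range_of_notMem_star {L : SimplicialComplex ℝ E3} {c x : E3}
    {v : Fin 4 → E3} (hcone : ∀ i, {c, v i, v (i + 1)} ∈ L.faces) (hx : {x} ∉ star L c) :
    c ≠ x ∧ x ∉ range v := by
  have mem_star (F : Finset E3) (hne : F.Nonempty) (i) (hF : F ⊆ {c, v i, v (i + 1)}) :
      F ∈ star L c :=
    ⟨L.down_closed (hcone i) hF hne, _, hcone i, by simp, hF⟩
  constructor
  · rintro rfl
    exact hx (mem_star _ (by simp) 0 (by simp))
  · rintro ⟨i, rfl⟩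
    exact hx (mem_star _ (by simp) i (by simp))

end CoxOrb

theorem raCone_on_circuit_octahedron_general {E : Type*} [DecidableEq E] [AddCommGroup E]
    [Module ℝ E] [TopologicalSpace E] [IsTopologicalAddGroup E] [ContinuousSMul ℝ E]
    (L : SimplicialComplex ℝ E) (m : E → E → ℕ)
    (hL : Nonempty (L.space ≃ₜ Metric.sphere (0 : EuclideanSpace ℝ (Fin 3)) 1))
    (hm : ∀ s t, m s t = m t s) (hflag : IsRightAngledFlag L m) (c : E) (v : Fin 4 → E)
    (hv : v.Injective) (hmv : ∀ i, m (v i) (v (i + 1)) = 2) (hcv : c ∉ Set.range v)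
    (hcone : ∀ i, {c, v i, v (i + 1)} ∈ L.faces) (hmc : ∀ i, m c (v i) = 2)
    (u : E) (hcu : c ≠ u ∧ u ∉ Set.range v) (hu0 : {u, v 0} ∈ L.faces) (hu2 : {u, v 2} ∈ L.faces)
    (hmu0 : m u (v 0) = 2) (hmu2 : m u (v 2) = 2)
    (w : E) (hcw : c ≠ w ∧ w ∉ Set.range v) (hw1 : {w, v 1} ∈ L.faces) (hw3 : {w, v 3} ∈ L.faces)
    (hmw1 : m w (v 1) = 2) (hmw3 : m w (v 3) = 2) :
    u = w ∧
    (∀ x, {x} ∈ L.faces ↔ x ∈ ({c, u, v 0, v 1, v 2, v 3} : Set E)) ∧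
    (∀ a b, a ≠ b → {a, b} ∈ L.faces → m a b = 2) ∧
    L.faces = octahedron c u v := by
  obtain ⟨e⟩ := hL
  obtain rfl : u = w :=
    eq_of_adjacent_opposite e hv hcv hcu.2 hcw.2 hcu.1 hcw.1 hcone hu0 hu2 hw1 hw3
  have hu : ∀ i, {u, v i} ∈ L.faces := by intro i; fin_cases i <;> assumption
  have hmu : ∀ i, m u (v i) = 2 := by intro i; fin_cases i <;> assumption
  have hvv (i) : {v i, v (i + 1)} ∈ L.faces := L.down_closed (hcone i) (by simp) (by simp)
  have hfaces : L.faces = octahedron c u v := faces_eq_octahedron e hv hcv hcu.2 hcu.1 hcone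
    (hflag.cone_mem_faces hm hv hcu.2 hvv hmv hu hmu)
  rw [hfaces]
  exact ⟨rfl, fun x ↦ singleton_mem_octahedron,
    fun a b ↦ label_eq_two_of_mem_octahedron hm hmv hmc hmu, rfl⟩

/-- Let `T` be the RA-cone on a Euclidean 4-circuit `v` with cone vertex `c`.
If a vertex `u ∉ T` is joined to the opposite corners `v 0, v 2` by edges
labeled `2` and a vertex `w ∉ T` is joined to the opposite corners `v 1, v 3`
by edges labeled `2`, then `u = w`, `L` has exactly the six vertices
`c, u, v 0, v 1, v 2, v 3`, every edge of `L` is labeled `2`, and `L` is the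
simplicial join of the 4-circuit with the two points `c, u` — a right-angled
octahedron. -/
theorem raCone_on_circuit_octahedron
    (L : SimplicialComplex ℝ E3) (m : E3 → E3 → ℕ)
    (hL : IsLabeledS2 L m) (hflag : MetricFlag L m)
    (c : E3) (v : Fin 4 → E3) (hv : IsEuclidean4Circuit L m v)
    (hlink : linkVerts L c = {v 0, v 1, v 2, v 3})
    (hcone : ∀ i : Fin 4, ({c, v i, v (i + 1)} : Finset E3) ∈ L.faces)
    (hclab : ∀ i : Fin 4, m c (v i) = 2)
    (T : Set (Finset E3)) (hT : T = star L c)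
    (u : E3) (hu : ({u} : Finset E3) ∈ L.faces) (huT : ({u} : Finset E3) ∉ T)
    (hu0 : ({u, v 0} : Finset E3) ∈ L.faces) (hu2 : ({u, v 2} : Finset E3) ∈ L.faces)
    (hmu0 : m u (v 0) = 2) (hmu2 : m u (v 2) = 2)
    (w : E3) (hw : ({w} : Finset E3) ∈ L.faces) (hwT : ({w} : Finset E3) ∉ T)
    (hw1 : ({w, v 1} : Finset E3) ∈ L.faces) (hw3 : ({w, v 3} : Finset E3) ∈ L.faces)
    (hmw1 : m w (v 1) = 2) (hmw3 : m w (v 3) = 2) :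
    u = w ∧
    (∀ x : E3, ({x} : Finset E3) ∈ L.faces ↔
      x ∈ ({c, u, v 0, v 1, v 2, v 3} : Set E3)) ∧
    (∀ a b : E3, a ≠ b → ({a, b} : Finset E3) ∈ L.faces → m a b = 2) ∧
    L.faces = joinSusp (circuitComplex v) c u := by
  subst hT
  rw [joinSusp_circuitComplex]
  exact raCone_on_circuit_octahedron_general L m hL.sphere hL.symm
    (rightAngledFlag_of_metricFlag hflag) c v hv.1 hv.2.2.1 (notMem_range_of_linkVerts hlink)
    hcone hclab u (ne_and_notMem_range_of_notMem_star hcone huT) hu0 hu2 hmu0 hmu2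
    w (ne_and_notMem_range_of_notMem_star hcone hwT) hw1 hw3 hmw1 hmw3
end
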